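/- arXiv:2309.07977 — 5 statements merged into one kernel-verified Lean document; each statement's English description precedes it below -/
import Mathlib

section
/- Let Ω ⊂ ℝ² be a bounded open set whose boundary consists of two disjoint connected components Γ₁ and Γ₂, each a smooth Jordan curve, and let Ω' be the bounded connected component of ℝ² \ closure(Ω), with ∂Ω' = Γ₂. Suppose u is twice continuously differentiable on an open neighborhood of closure(Ω), ∇u = 0 at every point of ∂Ω, u ≡ c₁ on Γ₁ and u ≡ c₂ on Γ₂. Define v : ℝ² → ℝ² by v = (∂u/∂x₂, −∂u/∂x₁) on closure(Ω) and v = 0 elsewhere. Then v is continuous on ℝ², the support of v is contained in closure(Ω), and v is divergence-free in the sense of distributions: ∫_{ℝ²} v·∇φ dx = 0 for every smooth compactly supported function φ : ℝ² → ℝ. -/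
open Real Set MeasureTheory

noncomputable section

abbrev Pt := EuclideanSpace ℝ (Fin 2)

/-- Partial derivative in the `i`-th coordinate direction. -/
def pd (i : Fin 2) (f : Pt → ℝ) (x : Pt) : ℝ := fderiv ℝ f x (EuclideanSpace.single i 1)

/-- A smooth Jordan curve in the plane: the image of a smooth, regular, `2π`-periodic
injective (modulo periods) parametrization. -/
def IsSmoothJordanCurve (Γ : Set Pt) : Prop :=
  ∃ γ : ℝ → Pt, ContDiff ℝ (⊤ : ℕ∞) γ ∧ Function.Periodic γ (2*π) ∧
    (∀ s t, γ s = γ t → ∃ n : ℤ, s - t = n * (2*π)) ∧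
    (∀ t, deriv γ t ≠ 0) ∧ Γ = Set.range γ

open Filter Topology

lemma exists_cutoff (K V : Set Pt) (hK : IsCompact K) (hV : IsOpen V) (hKV : K ⊆ V) (u : Pt → ℝ)
    (hu : ContDiffOn ℝ 2 u V) :
    ∃ w : Pt → ℝ, ContDiff ℝ 2 w ∧ HasCompactSupport w ∧ ∀ x ∈ K, w =ᶠ[𝓝 x] u := by
  obtain ⟨L, hL, hKL, hLV⟩ := exists_compact_between hK hV hKV
  obtain ⟨f, hf1, hf0, -⟩ := exists_contMDiffMap_one_nhds_of_subset_interior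
    (modelWithCornersSelf ℝ Pt) (n := 2) hK.isClosed hKL
  have hf : ContDiff ℝ 2 f := f.contMDiff.contDiff
  refine ⟨fun x => f x * u x, ?_, ?_, ?_⟩
  · rw [contDiff_iff_contDiffAt]
    intro x
    by_cases hx : x ∈ V
    · exact hf.contDiffAt.mul (hu.contDiffAt (hV.mem_nhds hx))
    · have hxL : x ∈ Lᶜ := fun h => hx (hLV h)
      have : (fun x => f x * u x) =ᶠ[𝓝 x] fun _ => 0 := by
        filter_upwards [hL.isClosed.isOpen_compl.mem_nhds hxL] with y hy
        rw [hf0 y hy, zero_mul]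
      exact contDiffAt_const.congr_of_eventuallyEq this
  · refine HasCompactSupport.intro hL fun x hx => ?_
    rw [hf0 x hx, zero_mul]
  · intro x hx
    have := hf1.filter_mono (nhds_le_nhdsSet hx)
    filter_upwards [this] with y hy
    rw [hy, one_mul]

lemma lipschitz_extend (K : Set Pt) (w g : Pt → ℝ) (C : NNReal)
    (hw : LipschitzWith C w) (h0 : ∀ x ∈ frontier K, w x = 0)
    (h1 : ∀ x ∈ K, g x = w x) (h2 : ∀ x ∉ K, g x = 0) : LipschitzWith C g := by
  have key : ∀ x ∈ K, ∀ y ∉ K, dist (w x) 0 ≤ C * dist x y := by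
    intro x hx y hy
    obtain ⟨z, hz, hzf⟩ : ∃ z ∈ segment ℝ x y, z ∈ frontier K := by
      by_contra! hcon
      have hcov : ∀ z ∈ segment ℝ x y, z ∈ interior K ∨ z ∈ interior Kᶜ := by
        intro z hz
        by_contra! h
        apply hcon z hz
        refine ⟨?_, h.1⟩
        have := h.2
        rwa [interior_compl, notMem_compl_iff] at this
      have hxi : x ∈ interior K := (hcov x (left_mem_segment ℝ x y)).resolve_right
        fun h => interior_subset h hx
      have hyi : y ∈ interior Kᶜ := (hcov y (right_mem_segment ℝ x y)).resolve_left
        fun h => hy (interior_subset h)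
      obtain ⟨z, -, hz1, hz2⟩ := (convex_segment (𝕜 := ℝ) x y).isPreconnected _ _
        isOpen_interior isOpen_interior hcov
        ⟨x, left_mem_segment ℝ x y, hxi⟩ ⟨y, right_mem_segment ℝ x y, hyi⟩
      exact interior_subset hz2 (interior_subset hz1)
    have := hw.dist_le_mul x z
    rw [h0 z hzf] at this
    refine this.trans ?_
    gcongr
    have := dist_add_dist_of_mem_segment hz
    have := dist_nonneg (x := z) (y := y)
    linarith
  refine LipschitzWith.of_dist_le_mul fun x y => ?_
  by_cases hx : x ∈ K <;> by_cases hy : y ∈ K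
  · rw [h1 x hx, h1 y hy]; exact hw.dist_le_mul x y
  · rw [h1 x hx, h2 y hy]; exact key x hx y hy
  · rw [h2 x hx, h1 y hy, dist_comm, dist_comm x y]; exact key y hy x hx
  · rw [h2 x hx, h2 y hy, dist_self]; positivity

lemma curve_null (Γ : Set Pt) (h : IsSmoothJordanCurve Γ) : volume Γ = 0 := by
  obtain ⟨γ, hγ, -, -, -, rfl⟩ := h
  let p : Pt →L[ℝ] ℝ := EuclideanSpace.proj 0
  have hd : ∀ x ∈ (univ : Set Pt), HasFDerivWithinAt (fun x : Pt => γ (p x))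
      ((fderiv ℝ γ (p x)).comp p) univ x := by
    intro x _
    have h1 : HasFDerivAt γ (fderiv ℝ γ (p x)) (p x) :=
      (hγ.differentiable (by simp) (p x)).hasFDerivAt
    exact (h1.comp x p.hasFDerivAt).hasFDerivWithinAt
  have h0 : ∀ x ∈ (univ : Set Pt), ((fderiv ℝ γ (p x)).comp p).det = 0 := by
    intro x _
    by_contra hne
    have hinj : Function.Injective ((fderiv ℝ γ (p x)).comp p) := by
      exact (LinearMap.equivOfDetNeZero
        (((fderiv ℝ γ (p x)).comp p : Pt →L[ℝ] Pt) : Pt →ₗ[ℝ] Pt) hne).injective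
    have : (EuclideanSpace.single 1 1 : Pt) = 0 := by
      apply hinj
      simp [p]
    have := congrArg (fun z : Pt => z 1) this
    simp at this
  have := addHaar_image_eq_zero_of_det_fderivWithin_eq_zero volume hd h0
  refine measure_mono_null ?_ this
  rintro _ ⟨t, rfl⟩
  exact ⟨EuclideanSpace.single 0 t, mem_univ _, by simp [p]⟩

lemma contDiff_pd (i : Fin 2) (w : Pt → ℝ) (hw : ContDiff ℝ 2 w) : ContDiff ℝ 1 (pd i w) :=
  (hw.fderiv_right (m := 1) (by norm_num)).clm_apply contDiff_const

lemma pd_comm (w : Pt → ℝ) (hw : ContDiff ℝ 2 w) (x : Pt) :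
    pd 0 (pd 1 w) x = pd 1 (pd 0 w) x := by
  have hd : DifferentiableAt ℝ (fderiv ℝ w) x :=
    (hw.fderiv_right (m := 1) (by norm_num)).differentiable (by simp) x
  have hs : IsSymmSndFDerivAt ℝ w x := hw.contDiffAt.isSymmSndFDerivAt (by simp)
  have e : ∀ i j, pd i (pd j w) x = fderiv ℝ (fderiv ℝ w) x (EuclideanSpace.single i 1)
      (EuclideanSpace.single j 1) := by
    intro i j
    have : HasFDerivAt (pd j w) ((fderiv ℝ (fderiv ℝ w) x).flip (EuclideanSpace.single j 1)) x := by
      have := hd.hasFDerivAt.clm_apply (hasFDerivAt_const (EuclideanSpace.single j (1:ℝ) : Pt) x)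
      simp only [ContinuousLinearMap.comp_zero, zero_add] at this
      exact this
    unfold pd at this ⊢
    rw [this.fderiv]; rfl
  rw [e, e, hs.eq]

lemma ibp (g φ : Pt → ℝ) (C : NNReal) (hg : LipschitzWith C g) (hφ : ContDiff ℝ (⊤ : ℕ∞) φ)
    (hc : HasCompactSupport φ) (i : Fin 2) :
    ∫ x, g x * pd i φ x = - ∫ x, lineDeriv ℝ g x (EuclideanSpace.single i 1) * φ x := by
  obtain ⟨D, hD⟩ := ContDiff.lipschitzWith_of_hasCompactSupport hc hφ (by simp)
  rw [hg.integral_lineDeriv_mul_eq hD hc, ← integral_neg]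
  congr 1
  ext x
  rw [(hφ.differentiable (by simp) x).lineDeriv_eq_fderiv, map_neg, pd]
  ring

/-- If `u` is `C²` near `closure Ω`, has vanishing gradient on `∂Ω`
and is locally constant on the two smooth Jordan boundary curves, then the field
`v = (∂₂u, −∂₁u)` extended by zero outside `closure Ω` is continuous, supported in
`closure Ω`, and divergence-free in the sense of distributions. -/
theorem vector_field_continuous_divergence_free
    (Ω Ω' Γ₁ Γ₂ : Set Pt) (u : Pt → ℝ) (c₁ c₂ : ℝ) (v : Pt → ℝ × ℝ)
    (hΩopen : IsOpen Ω) (hΩbd : Bornology.IsBounded Ω)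
    (hfr : frontier Ω = Γ₁ ∪ Γ₂) (hdisj : Disjoint Γ₁ Γ₂)
    (hΓ₁ : IsSmoothJordanCurve Γ₁) (hΓ₂ : IsSmoothJordanCurve Γ₂)
    (hΩ'open : IsOpen Ω') (hΩ'conn : IsConnected Ω') (hΩ'bd : Bornology.IsBounded Ω')
    (hΩ'sub : Ω' ⊆ (closure Ω)ᶜ)
    (hΩ'comp : ∀ x ∈ Ω', connectedComponentIn (closure Ω)ᶜ x = Ω')
    (hΩ'fr : frontier Ω' = Γ₂)
    (hu : ∃ V : Set Pt, IsOpen V ∧ closure Ω ⊆ V ∧ ContDiffOn ℝ 2 u V)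
    (hgrad : ∀ x ∈ frontier Ω, fderiv ℝ u x = 0)
    (hb1 : ∀ x ∈ Γ₁, u x = c₁) (hb2 : ∀ x ∈ Γ₂, u x = c₂)
    (hv₁ : ∀ x ∈ closure Ω, v x = (pd 1 u x, -pd 0 u x))
    (hv₂ : ∀ x ∉ closure Ω, v x = 0) :
    Continuous v ∧ Function.support v ⊆ closure Ω ∧
      ∀ φ : Pt → ℝ, ContDiff ℝ (⊤ : ℕ∞) φ → HasCompactSupport φ →
        ∫ x, ((v x).1 * pd 0 φ x + (v x).2 * pd 1 φ x) = 0 := by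
  obtain ⟨V, hVo, hKV, huV⟩ := hu
  have hK : IsCompact (closure Ω) := hΩbd.isCompact_closure
  obtain ⟨w, hw, hwc, hwu⟩ := exists_cutoff _ V hK hVo hKV u huV
  have hpd : ∀ i, ∀ x ∈ closure Ω, pd i u x = pd i w x := fun i x hx => by
    rw [pd, pd, (hwu x hx).fderiv_eq]
  have hw0 : ∀ i, ∀ x ∈ frontier (closure Ω), pd i w x = 0 := fun i x hx => by
    have hx' := frontier_closure_subset hx
    rw [← hpd i x (frontier_subset_closure hx'), pd, hgrad x hx']; rfl
  have hLip : ∀ i, ∃ C, LipschitzWith C (pd i w) := fun i =>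
    ContDiff.lipschitzWith_of_hasCompactSupport
      (hwc.fderiv_apply ℝ (EuclideanSpace.single i 1)) (contDiff_pd i w hw) (by simp)
  obtain ⟨C1, hC1⟩ := hLip 1
  obtain ⟨C0, hC0⟩ := hLip 0
  have hg1 : LipschitzWith C1 (fun x => (v x).1) :=
    lipschitz_extend (closure Ω) (pd 1 w) _ C1 hC1 (hw0 1)
      (fun x hx => by simp [hv₁ x hx, hpd 1 x hx]) (fun x hx => by simp [hv₂ x hx])
  have hg2 : LipschitzWith C0 (fun x => (v x).2) :=
    lipschitz_extend (closure Ω) (fun x => - pd 0 w x) _ C0 hC0.neg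
      (fun x hx => by simp [hw0 0 x hx])
      (fun x hx => by simp [hv₁ x hx, hpd 0 x hx]) (fun x hx => by simp [hv₂ x hx])
  refine ⟨hg1.continuous.prodMk hg2.continuous, ?_, ?_⟩
  · intro x hx
    by_contra h
    exact hx (hv₂ x h)
  intro φ hφ hc
  have hpc : ∀ i, Continuous (pd i φ) := fun i =>
    (contDiff_pd i φ (hφ.of_le (by exact WithTop.coe_le_coe.2 le_top))).continuous
  have hps : ∀ i, HasCompactSupport (pd i φ) := fun i =>
    hc.fderiv_apply ℝ (EuclideanSpace.single i 1)
  have i1 : Integrable (fun x => (v x).1 * pd 0 φ x) :=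
    (hg1.continuous.mul (hpc 0)).integrable_of_hasCompactSupport (hps 0).mul_left
  have i2 : Integrable (fun x => (v x).2 * pd 1 φ x) :=
    (hg2.continuous.mul (hpc 1)).integrable_of_hasCompactSupport (hps 1).mul_left
  rw [integral_add i1 i2, ibp _ φ C1 hg1 hφ hc 0, ibp _ φ C0 hg2 hφ hc 1]
  have hnull : volume (frontier Ω) = 0 := by
    rw [hfr]
    exact measure_union_null (curve_null _ hΓ₁) (curve_null _ hΓ₂)
  have hae : ∀ᵐ x : Pt, x ∉ frontier Ω := measure_eq_zero_iff_ae_notMem.1 hnull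
  have : ∫ x, lineDeriv ℝ (fun x => (v x).2) x (EuclideanSpace.single 1 1) * φ x =
      - ∫ x, lineDeriv ℝ (fun x => (v x).1) x (EuclideanSpace.single 0 1) * φ x := by
    rw [← integral_neg]
    apply integral_congr_ae
    filter_upwards [hae] with x hx
    by_cases hxK : x ∈ closure Ω
    · have hxΩ : x ∈ Ω := by
        by_contra h
        exact hx ⟨hxK, by rwa [hΩopen.interior_eq]⟩
      have hn := hΩopen.mem_nhds hxΩ
      have e1 : (fun x => (v x).1) =ᶠ[𝓝 x] pd 1 w := by
        filter_upwards [hn] with y hy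
        simp [hv₁ y (subset_closure hy), hpd 1 y (subset_closure hy)]
      have e2 : (fun x => (v x).2) =ᶠ[𝓝 x] fun y => - pd 0 w y := by
        filter_upwards [hn] with y hy
        simp [hv₁ y (subset_closure hy), hpd 0 y (subset_closure hy)]
      have d1 := (contDiff_pd 1 w hw).differentiable (by simp) x
      have d0 := (contDiff_pd 0 w hw).differentiable (by simp) x
      rw [e1.lineDeriv_eq, e2.lineDeriv_eq, d1.lineDeriv_eq_fderiv,
        d0.fun_neg.lineDeriv_eq_fderiv, fderiv_fun_neg]
      have := pd_comm w hw x
      rw [pd, pd.eq_1 1 (pd 0 w)] at this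
      rw [this]
      simp
    · have hn := isClosed_closure.isOpen_compl.mem_nhds hxK
      have e1 : (fun x => (v x).1) =ᶠ[𝓝 x] fun _ => 0 := by
        filter_upwards [hn] with y hy
        simp [hv₂ y hy]
      have e2 : (fun x => (v x).2) =ᶠ[𝓝 x] fun _ => 0 := by
        filter_upwards [hn] with y hy
        simp [hv₂ y hy]
      have z : ∀ e, lineDeriv ℝ (fun _ : Pt => (0 : ℝ)) x e = 0 := by
        intro e
        simp [lineDeriv]
      rw [e1.lineDeriv_eq, e2.lineDeriv_eq, z, z, zero_mul, neg_zero]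
  rw [this]
  ring


end
end

section
/- Let 0 < a < 1, μ ∈ ℝ, and let n ≥ 1 be an integer. Suppose ψ : [a,1] → ℝ is nonconstant, three times continuously differentiable, and satisfies ψ''(r) + ψ'(r)/r + μψ(r) = 0 for all r ∈ [a,1] together with ψ'(a) = ψ'(1) = 0. Then φ := ψ' is a not-identically-zero solution of φ''(r) + φ'(r)/r − φ(r)/r² + μφ(r) = 0 on [a,1] with φ(a) = φ(1) = 0; moreover, if ψ has exactly n zeros in the open interval (a,1), then φ has exactly n − 1 zeros in (a,1). (This expresses the identity μ_{0,n}(a) = λ_{1,n−1}(a) between the n-th radial Neumann eigenvalue and the (n−1)-st 1-mode Dirichlet eigenvalue of the annulus {x ∈ ℝ² : a < |x| < 1}.) -/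
open Set

theorem rolle_count (a : ℝ) (f g : ℝ → ℝ) (p : ℝ → Prop) (hf : ContinuousOn f (Set.Icc a 1))
    (hd : ∀ r ∈ Set.Ioo a 1, HasDerivAt f (g r) r) (hp : ∀ r ∈ Set.Ioo a 1, g r = 0 → p r)
    (S T : Finset ℝ) (hS : ∀ r ∈ S, r ∈ Set.Icc a 1 ∧ f r = 0)
    (hT : ∀ r ∈ Set.Ioo a 1, p r → r ∈ T) : S.card ≤ T.card + 1 := by
  apply Finset.card_le_of_interleaved
  intro x hx y hy hxy _
  obtain ⟨hx1, hx2⟩ := hS x hx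
  obtain ⟨hy1, hy2⟩ := hS y hy
  obtain ⟨c, hc, hc0⟩ := exists_hasDerivAt_eq_zero (f := f) (f' := g) hxy
    (hf.mono (Set.Icc_subset_Icc hx1.1 hy1.2)) (by rw [hx2, hy2])
    (fun z hz => hd z ⟨hx1.1.trans_lt hz.1, hz.2.trans_le hy1.2⟩)
  have hc' : c ∈ Set.Ioo a 1 := ⟨hx1.1.trans_lt hc.1, hc.2.trans_le hy1.2⟩
  exact ⟨c, hT c hc' (hp c hc' hc0), hc.1, hc.2⟩

/-- The derivative of a nonconstant radial Neumann eigenfunction of the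
annulus `{a < |x| < 1}` is a nontrivial `1`-mode Dirichlet eigenfunction, and the nodal
count drops by one; this expresses the identity `μ_{0,n}(a) = λ_{1,n−1}(a)`. -/
theorem radial_neumann_gives_dirichlet
    (a μ : ℝ) (n : ℕ) (ha : a ∈ Set.Ioo (0:ℝ) 1) (hn : 1 ≤ n)
    (ψ : ℝ → ℝ) (hC3 : ContDiffOn ℝ 3 ψ (Set.Icc a 1))
    (hnc : ∃ r ∈ Set.Icc a 1, ∃ s ∈ Set.Icc a 1, ψ r ≠ ψ s)
    (hode : ∀ r ∈ Set.Icc a 1,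
      derivWithin (derivWithin ψ (Set.Icc a 1)) (Set.Icc a 1) r
        + derivWithin ψ (Set.Icc a 1) r / r + μ * ψ r = 0)
    (hbca : derivWithin ψ (Set.Icc a 1) a = 0)
    (hbc1 : derivWithin ψ (Set.Icc a 1) 1 = 0) :
    (¬ ∀ r ∈ Set.Icc a 1, derivWithin ψ (Set.Icc a 1) r = 0) ∧
    (∀ r ∈ Set.Icc a 1,
      derivWithin (derivWithin (derivWithin ψ (Set.Icc a 1)) (Set.Icc a 1)) (Set.Icc a 1) r
        + derivWithin (derivWithin ψ (Set.Icc a 1)) (Set.Icc a 1) r / r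
        - derivWithin ψ (Set.Icc a 1) r / r^2
        + μ * derivWithin ψ (Set.Icc a 1) r = 0) ∧
    derivWithin ψ (Set.Icc a 1) a = 0 ∧ derivWithin ψ (Set.Icc a 1) 1 = 0 ∧
    ({r ∈ Set.Ioo a 1 | ψ r = 0}.encard = (n : ℕ∞) →
      {r ∈ Set.Ioo a 1 | derivWithin ψ (Set.Icc a 1) r = 0}.encard = ((n - 1 : ℕ) : ℕ∞)) := by
  obtain ⟨ha0, ha1⟩ := ha
  have hu : UniqueDiffOn ℝ (Set.Icc a 1) := uniqueDiffOn_Icc ha1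
  have hψd : DifferentiableOn ℝ ψ (Set.Icc a 1) := hC3.differentiableOn (by norm_num)
  have hφc : ContDiffOn ℝ 2 (derivWithin ψ (Set.Icc a 1)) (Set.Icc a 1) :=
    hC3.derivWithin hu (by norm_num)
  have hφd : DifferentiableOn ℝ (derivWithin ψ (Set.Icc a 1)) (Set.Icc a 1) :=
    hφc.differentiableOn (by norm_num)
  set φ := derivWithin ψ (Set.Icc a 1) with hφ
  have hψ' : ∀ r ∈ Set.Ioo a 1, HasDerivAt ψ (φ r) r := fun r hr =>
    (hψd r (Set.Ioo_subset_Icc_self hr)).hasDerivWithinAt.hasDerivAt (Icc_mem_nhds hr.1 hr.2)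
  have hφ' : ∀ r ∈ Set.Ioo a 1, HasDerivAt φ (derivWithin φ (Set.Icc a 1) r) r := fun r hr =>
    (hφd r (Set.Ioo_subset_Icc_self hr)).hasDerivWithinAt.hasDerivAt (Icc_mem_nhds hr.1 hr.2)
  have hpos : ∀ r ∈ Set.Icc a 1, 0 < r := fun r hr => ha0.trans_le hr.1
  have hF' : ∀ r ∈ Set.Ioo a 1, HasDerivAt (fun r => r * φ r) (-μ * r * ψ r) r := by
    intro r hr
    have hI := Set.Ioo_subset_Icc_self hr
    have h := (hasDerivAt_id r).mul (hφ' r hr)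
    have h0 := hode r hI
    have hr0 := hpos r hI
    refine h.congr_deriv ?_
    field_simp at h0
    simp only [id]
    linarith
  have hFc : ContinuousOn (fun r => r * φ r) (Set.Icc a 1) :=
    continuousOn_id.mul hφd.continuousOn
  have hnz : ¬ ∀ r ∈ Set.Icc a 1, φ r = 0 := by
    intro h
    obtain ⟨r, hr, s, hs, hrs⟩ := hnc
    have := constant_of_derivWithin_zero hψd (fun x hx => h x (Set.Ico_subset_Icc_self hx))
    exact hrs ((this r hr).trans (this s hs).symm)
  have hμ : 0 < μ := by
    by_contra hμ
    push Not at hμ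
    apply hnz
    have hG' : ∀ r ∈ Set.Ioo a 1, HasDerivAt (fun r => r * φ r * ψ r)
        (-μ * r * ψ r * ψ r + r * φ r * φ r) r := fun r hr => (hF' r hr).mul (hψ' r hr)
    have hGc : ContinuousOn (fun r => r * φ r * ψ r) (Set.Icc a 1) := hFc.mul hψd.continuousOn
    have hmono : MonotoneOn (fun r => r * φ r * ψ r) (Set.Icc a 1) := by
      apply monotoneOn_of_deriv_nonneg (convex_Icc a 1) hGc
      · rw [interior_Icc]
        exact fun r hr => (hG' r hr).differentiableAt.differentiableWithinAt
      · rw [interior_Icc]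
        intro r hr
        rw [(hG' r hr).deriv]
        have hr0 := hpos r (Set.Ioo_subset_Icc_self hr)
        have h1 : 0 ≤ (-μ * r) * (ψ r * ψ r) :=
          mul_nonneg (mul_nonneg (by linarith) hr0.le) (mul_self_nonneg _)
        have h2 : 0 ≤ r * (φ r * φ r) := mul_nonneg hr0.le (mul_self_nonneg _)
        linarith
    have hG0 : ∀ r ∈ Set.Icc a 1, r * φ r * ψ r = 0 := by
      intro r hr
      have h1 := hmono (Set.left_mem_Icc.2 ha1.le) hr hr.1
      have h2 := hmono hr (Set.right_mem_Icc.2 ha1.le) hr.2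
      simp only [hbca, hbc1] at h1 h2
      linarith
    intro r hr
    rcases eq_or_lt_of_le hr.1 with h | hl
    · rw [← h]; exact hbca
    rcases eq_or_lt_of_le hr.2 with h | hg
    · rw [h]; exact hbc1
    have hr0 := hpos r hr
    have hev : (fun r => r * φ r * ψ r) =ᶠ[nhds r] fun _ => 0 := by
      filter_upwards [Icc_mem_nhds hl hg] with x hx using hG0 x hx
    have h3 := (hG' r ⟨hl, hg⟩).unique ((hasDerivAt_const r (0:ℝ)).congr_of_eventuallyEq hev)
    have h1 : 0 ≤ (-μ * r) * (ψ r * ψ r) :=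
      mul_nonneg (mul_nonneg (by linarith) hr0.le) (mul_self_nonneg _)
    have h2 : 0 ≤ r * (φ r * φ r) := mul_nonneg hr0.le (mul_self_nonneg _)
    have h4 : r * (φ r * φ r) = 0 := by linarith
    have h5 := (mul_eq_zero.1 h4).resolve_left hr0.ne'
    exact mul_self_eq_zero.1 h5
  refine ⟨hnz, ?_, hbca, hbc1, ?_⟩
  · intro r hr
    have hr0 := hpos r hr
    have h1 : HasDerivWithinAt (fun r => -(φ r / r) - μ * ψ r)
        (-((derivWithin φ (Set.Icc a 1) r * r - φ r * 1) / r ^ 2) - μ * φ r) (Set.Icc a 1) r :=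
      ((hφd r hr).hasDerivWithinAt.div (hasDerivWithinAt_id r _) hr0.ne').neg.sub
        ((hψd r hr).hasDerivWithinAt.const_mul μ)
    have h2 : HasDerivWithinAt (derivWithin φ (Set.Icc a 1))
        (-((derivWithin φ (Set.Icc a 1) r * r - φ r * 1) / r ^ 2) - μ * φ r) (Set.Icc a 1) r :=
      h1.congr (fun x hx => by have := hode x hx; linarith) (by have := hode r hr; linarith)
    rw [h2.derivWithin (hu r hr)]
    field_simp
    ring
  · intro hcard
    have hPfin : {r ∈ Set.Ioo a 1 | ψ r = 0}.Finite := Set.finite_of_encard_eq_coe hcard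
    have hPc : hPfin.toFinset.card = n := by
      rw [hPfin.encard_eq_coe_toFinset_card] at hcard
      exact_mod_cast hcard
    have key : ∀ S : Finset ℝ, (∀ r ∈ S, r ∈ Set.Icc a 1 ∧ φ r = 0) → S.card ≤ n + 1 := by
      intro S hS
      rw [← hPc]
      refine rolle_count a (fun r => r * φ r) (fun r => -μ * r * ψ r) (fun r => ψ r = 0) hFc hF' ?_
        S _ (fun r hr => ⟨(hS r hr).1, by simp [(hS r hr).2]⟩) (fun r hr h => by simpa using ⟨hr, h⟩)
      intro r hr h
      have hr0 := hpos r (Set.Ioo_subset_Icc_self hr)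
      exact (mul_eq_zero.1 h).resolve_left (mul_ne_zero (neg_ne_zero.2 hμ.ne') hr0.ne')
    have hQfin : {r ∈ Set.Ioo a 1 | φ r = 0}.Finite := by
      by_contra hinf
      obtain ⟨S, hS, hSc⟩ := Set.Infinite.exists_subset_card_eq hinf (n + 2)
      have := key S (fun r hr => ⟨Set.Ioo_subset_Icc_self (hS hr).1, (hS hr).2⟩)
      omega
    have h1 : hPfin.toFinset.card ≤ hQfin.toFinset.card + 1 := by
      refine rolle_count a ψ φ (fun r => φ r = 0) hψd.continuousOn hψ' (fun _ _ h => h) _ _ ?_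
        (fun r hr h => by simpa using ⟨hr, h⟩)
      intro r hr
      have hr' := hPfin.mem_toFinset.1 hr
      exact ⟨Set.Ioo_subset_Icc_self hr'.1, hr'.2⟩
    have h2 := key (insert a (insert 1 hQfin.toFinset)) (by
      intro r hr
      rcases Finset.mem_insert.1 hr with h | hr
      · rw [h]; exact ⟨Set.left_mem_Icc.2 ha1.le, hbca⟩
      rcases Finset.mem_insert.1 hr with h | hr
      · rw [h]; exact ⟨Set.right_mem_Icc.2 ha1.le, hbc1⟩
      have hr' := hQfin.mem_toFinset.1 hr
      exact ⟨Set.Ioo_subset_Icc_self hr'.1, hr'.2⟩)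
    rw [Finset.card_insert_of_notMem (by simp [ha1.ne]), Finset.card_insert_of_notMem (by simp)] at h2
    rw [hQfin.encard_eq_coe_toFinset_card]
    congr 1
    omega
end

section
/- For every integer l ≥ 4 there exist a ∈ (0,1) and μ > 0 with the following three properties. (i) The Neumann problem ψ''(r) + ψ'(r)/r + μψ(r) = 0 on (a,1) with ψ'(a) = ψ'(1) = 0 has a nonconstant C² solution with exactly two zeros in (a,1) (so μ equals the second nontrivial radial Neumann eigenvalue μ_{0,2}(a) of the annulus {a < |x| < 1}). (ii) The Dirichlet problem φ''(r) + φ'(r)/r − l²φ(r)/r² + μφ(r) = 0 on (a,1) with φ(a) = φ(1) = 0 has a C² solution φ which is positive on (a,1) (so μ equals the first l-mode Dirichlet eigenvalue λ_{l,0}(a)). (iii) Non-resonance: for every integer m ≥ 1, every not-identically-zero C² solution w of w''(r) + w'(r)/r − (ml)²w(r)/r² + μw(r) = 0 on (a,1) with w(a) = w(1) = 0 satisfies m = 1 and w is a scalar multiple of φ. -/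
open Set


/-- Truncation of a real number to `[-R, R]`. -/
noncomputable def clipR (R x : ℝ) : ℝ := max (-R) (min R x)

lemma clipR_abs_le {R : ℝ} (hR : 0 ≤ R) (x : ℝ) : |clipR R x| ≤ R := by
  unfold clipR
  rw [abs_le]
  exact ⟨le_max_left _ _, max_le (by linarith) (min_le_left _ _)⟩

lemma clipR_abs_le_abs {R : ℝ} (hR : 0 ≤ R) (x : ℝ) : |clipR R x| ≤ |x| := by
  unfold clipR
  rw [abs_le]
  refine ⟨?_, max_le (by linarith [abs_nonneg x]) ((min_le_right _ _).trans (le_abs_self x))⟩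
  rcases le_total R x with h | h
  · rw [min_eq_left h]
    exact (by linarith [abs_nonneg x] : -|x| ≤ R).trans (le_max_right _ _)
  · rw [min_eq_right h]
    exact (neg_abs_le x).trans (le_max_right _ _)

lemma clipR_eq {R x : ℝ} (hx : |x| ≤ R) : clipR R x = x := by
  unfold clipR
  rw [abs_le] at hx
  rw [min_eq_right hx.2, max_eq_right hx.1]

lemma clipR_dist (R x y : ℝ) : |clipR R x - clipR R y| ≤ |x - y| := by
  have h : LipschitzWith 1 (fun x : ℝ => max (-R) (min R x)) :=
    (LipschitzWith.id.const_min R).const_max (-R)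
  have := h.dist_le_mul x y
  simpa [Real.dist_eq, clipR] using this

lemma ode_exists (k lo hi : ℝ) (hlo : 0 < lo) (hhi : lo < hi) (x0 y0 : ℝ) :
    ∃ u v : ℝ → ℝ, u lo = x0 ∧ v lo = y0 ∧
      (∀ r ∈ Icc lo hi, HasDerivWithinAt u (v r / r) (Icc lo hi) r) ∧
      (∀ r ∈ Icc lo hi, HasDerivWithinAt v ((k ^ 2 - r ^ 2) / r * u r) (Icc lo hi) r) := by
  set K : ℝ := (1 + k ^ 2 + hi ^ 2) / lo with hK
  have hKpos : 0 < K := by positivity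
  set R : ℝ := ‖(x0, y0)‖ * Real.exp (K * (hi - lo)) with hR
  have hR0 : 0 ≤ R := by positivity
  have hinv : ∀ t ∈ Icc lo hi, |1 / t| ≤ K := by
    intro t ht
    have ht0 : 0 < t := hlo.trans_le ht.1
    rw [abs_of_pos (by positivity), hK]
    apply div_le_div₀ (by positivity) (by nlinarith [sq_nonneg k, sq_nonneg hi]) hlo ht.1
  have hcoef : ∀ t ∈ Icc lo hi, |(k ^ 2 - t ^ 2) / t| ≤ K := by
    intro t ht
    have ht0 : 0 < t := hlo.trans_le ht.1
    rw [abs_div, abs_of_pos ht0, hK]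
    apply div_le_div₀ (by positivity) _ hlo ht.1
    rw [abs_le]
    constructor <;> nlinarith [sq_nonneg k, sq_nonneg hi, ht.2, sq_nonneg t]
  let f : ℝ → ℝ × ℝ → ℝ × ℝ := fun t z =>
    ((1 / t) * clipR R z.2, (k ^ 2 - t ^ 2) / t * clipR R z.1)
  have hmul : ∀ c x y : ℝ, |c| ≤ K → |x| ≤ y → |c * x| ≤ K * y := by
    intro c x y hc hx
    rw [abs_mul]
    exact mul_le_mul hc hx (abs_nonneg _) hKpos.le
  have hfle : ∀ t ∈ Icc lo hi, ∀ z, ‖f t z‖ ≤ K * ‖z‖ := by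
    intro t ht z
    rw [Prod.norm_def]
    refine max_le ?_ ?_
    · exact hmul _ _ _ (hinv t ht) ((clipR_abs_le_abs hR0 _).trans (norm_snd_le z))
    · exact hmul _ _ _ (hcoef t ht) ((clipR_abs_le_abs hR0 _).trans (norm_fst_le z))
  have hPL : IsPicardLindelof f (tmin := lo) (tmax := hi) ⟨lo, le_refl _, hhi.le⟩ (x0, y0)
      (Real.toNNReal (K * R * (hi - lo))) 0 (Real.toNNReal (K * R)) (Real.toNNReal K) := by
    refine ⟨?_, ?_, ?_, ?_⟩
    · intro t ht
      apply LipschitzWith.lipschitzOnWith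
      apply LipschitzWith.of_dist_le_mul
      intro z w
      rw [Real.coe_toNNReal _ hKpos.le, dist_eq_norm, dist_eq_norm, Prod.norm_def]
      refine max_le ?_ ?_
      · change |(1 / t) * clipR R z.2 - (1 / t) * clipR R w.2| ≤ _
        rw [← mul_sub]
        exact hmul _ _ _ (hinv t ht) ((clipR_dist _ _ _).trans (norm_snd_le (z - w)))
      · change |(k ^ 2 - t ^ 2) / t * clipR R z.1 - (k ^ 2 - t ^ 2) / t * clipR R w.1| ≤ _
        rw [← mul_sub]
        exact hmul _ _ _ (hcoef t ht) ((clipR_dist _ _ _).trans (norm_fst_le (z - w)))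
    · intro z _
      have h0 : ∀ t ∈ Icc lo hi, t ≠ 0 := fun t ht => (hlo.trans_le ht.1).ne'
      apply ContinuousOn.prodMk
      · exact (continuousOn_const.div continuousOn_id h0).mul continuousOn_const
      · exact (ContinuousOn.div (by fun_prop) continuousOn_id h0).mul continuousOn_const
    · intro t ht z _
      rw [Real.coe_toNNReal _ (by positivity), Prod.norm_def]
      refine max_le ?_ ?_
      · exact hmul _ _ _ (hinv t ht) (clipR_abs_le hR0 _)
      · exact hmul _ _ _ (hcoef t ht) (clipR_abs_le hR0 _)
    · have h1 : 0 ≤ hi - lo := by linarith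
      rw [Real.coe_toNNReal _ (by positivity), Real.coe_toNNReal _ (by positivity)]
      simp [h1]
  obtain ⟨z, hz0, hz⟩ := hPL.exists_eq_forall_mem_Icc_hasDerivWithinAt₀
  have hcont : ContinuousOn z (Icc lo hi) := fun t ht => (hz t ht).continuousWithinAt
  have hbd : ∀ t ∈ Icc lo hi, ‖z t‖ ≤ R := by
    intro t ht
    have := norm_le_gronwallBound_of_norm_deriv_right_le (f := z) (f' := fun t => f t (z t))
      (δ := ‖(x0, y0)‖) (K := K) (ε := 0) hcont
      (fun x hx => (hz x ⟨hx.1, hx.2.le⟩).mono_of_mem_nhdsWithin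
        (Icc_mem_nhdsGE_of_mem hx)) (by rw [← hz0]) (fun x hx => by
          simpa using hfle x ⟨hx.1, hx.2.le⟩ (z x)) t ht
    rw [gronwallBound_ε0] at this
    refine this.trans ?_
    rw [hR]
    gcongr
    exact ht.2
  refine ⟨fun t => (z t).1, fun t => (z t).2, by simp_all, by simp_all, ?_, ?_⟩
  · intro t ht
    have h1 := hasFDerivAt_fst.comp_hasDerivWithinAt t (hz t ht)
    have h2 : (f t (z t)).1 = (z t).2 / t := by
      change (1 / t) * clipR R (z t).2 = _
      rw [clipR_eq ((norm_snd_le (z t)).trans (hbd t ht))]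
      ring
    exact h1.congr_deriv h2
  · intro t ht
    have h1 := hasFDerivAt_snd.comp_hasDerivWithinAt t (hz t ht)
    have h2 : (f t (z t)).2 = (k ^ 2 - t ^ 2) / t * (z t).1 := by
      change (k ^ 2 - t ^ 2) / t * clipR R (z t).1 = _
      rw [clipR_eq ((norm_fst_le (z t)).trans (hbd t ht))]
    exact h1.congr_deriv h2


/-- Phase-amplitude description of the solutions of the scaled Bessel system of order `k`
on `(lo, hi)`: `D s` is the solution vanishing at `s`, and `V s r = r * (D s)' r`. -/
structure PhaseSys (k lo hi : ℝ) (α : ℝ → ℝ) (D V : ℝ → ℝ → ℝ) : Prop where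
  mono : StrictMonoOn α (Ioo lo hi)
  cont : ContinuousOn α (Ioo lo hi)
  dD : ∀ s ∈ Ioo lo hi, ∀ r ∈ Ioo lo hi, HasDerivAt (D s) (V s r / r) r
  dV : ∀ s ∈ Ioo lo hi, ∀ r ∈ Ioo lo hi, HasDerivAt (V s) ((k ^ 2 - r ^ 2) / r * D s r) r
  sinD : ∀ s ∈ Ioo lo hi, ∀ r ∈ Ioo lo hi, ∃ g > 0, D s r = g * Real.sin (α r - α s)
  cosV : ∀ s ∈ Ioo lo hi, ∀ r ∈ Ioo lo hi, Real.sin (α r - α s) = 0 →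
    ∃ g > 0, V s r = g * Real.cos (α r - α s)

lemma const_on_Icc {f f' : ℝ → ℝ} {lo hi : ℝ}
    (hf : ∀ r ∈ Icc lo hi, HasDerivWithinAt f (f' r) (Icc lo hi) r)
    (h0 : ∀ r ∈ Icc lo hi, f' r = 0) : ∀ r ∈ Icc lo hi, f r = f lo := by
  apply constant_of_has_deriv_right_zero (fun t ht => (hf t ht).continuousWithinAt)
  intro x hx
  have := hf x ⟨hx.1, hx.2.le⟩
  rw [h0 x ⟨hx.1, hx.2.le⟩] at this
  exact this.mono_of_mem_nhdsWithin (Icc_mem_nhdsGE_of_mem hx)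

lemma phaseSys_exists (k lo hi : ℝ) (hlo : 0 < lo) (hhi : lo < hi) :
    ∃ α D V, PhaseSys k lo hi α D V := by
  obtain ⟨p, vp, hp0, hvp0, hp, hvp⟩ := ode_exists k lo hi hlo hhi 1 0
  obtain ⟨q, vq, hq0, hvq0, hq, hvq⟩ := ode_exists k lo hi hlo hhi 0 1
  have hpos : ∀ r ∈ Icc lo hi, 0 < r := fun r hr => hlo.trans_le hr.1
  have hlomem : lo ∈ Icc lo hi := ⟨le_refl _, hhi.le⟩
  have hW : ∀ r ∈ Icc lo hi, p r * vq r - q r * vp r = 1 := by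
    intro r hr
    have := const_on_Icc (f := fun r => p r * vq r - q r * vp r)
      (fun r hr => ((hp r hr).mul (hvq r hr)).sub ((hq r hr).mul (hvp r hr)))
      (fun r hr => by ring) r hr
    simp only [hp0, hvp0, hq0, hvq0] at this
    linarith
  let R2 : ℝ → ℝ := fun r => p r ^ 2 + q r ^ 2
  have hR2pos : ∀ r ∈ Icc lo hi, 0 < R2 r := by
    intro r hr
    change 0 < p r ^ 2 + q r ^ 2
    by_contra hcon
    have h1 : p r = 0 := by nlinarith [sq_nonneg (p r), sq_nonneg (q r)]
    have h2 : q r = 0 := by nlinarith [sq_nonneg (p r), sq_nonneg (q r)]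
    have := hW r hr
    rw [h1, h2] at this
    norm_num at this
  have hpc : ContinuousOn p (Icc lo hi) := fun t ht => (hp t ht).continuousWithinAt
  have hqc : ContinuousOn q (Icc lo hi) := fun t ht => (hq t ht).continuousWithinAt
  have hhc : ContinuousOn (fun r => 1 / (r * R2 r)) (Icc lo hi) := by
    apply ContinuousOn.div continuousOn_const
    · exact continuousOn_id.mul ((hpc.pow 2).add (hqc.pow 2))
    · intro r hr
      exact (mul_pos (hpos r hr) (hR2pos r hr)).ne'
  let H : ℝ → ℝ := IccExtend hhi.le ((Icc lo hi).domRestrict (fun r => 1 / (r * R2 r)))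
  have hH : Continuous H := (continuousOn_iff_continuous_domRestrict.1 hhc).Icc_extend'
  have hHeq : ∀ r ∈ Icc lo hi, H r = 1 / (r * R2 r) := by
    intro r hr
    simp only [H]
    rw [IccExtend_of_mem _ _ hr]
    rfl
  let α : ℝ → ℝ := fun r => ∫ x in lo..r, H x
  have hα0 : α lo = 0 := by simp [α]
  have hα : ∀ r, HasDerivAt α (H r) r := fun r => (hH.integral_hasStrictDerivAt lo r).hasDerivAt
  let f : ℝ → ℝ := fun r => Real.sqrt (R2 r)
  have hfpos : ∀ r ∈ Icc lo hi, 0 < f r := fun r hr => Real.sqrt_pos.2 (hR2pos r hr)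
  have hfsq : ∀ r ∈ Icc lo hi, f r * f r = R2 r := fun r hr => Real.mul_self_sqrt (hR2pos r hr).le
  let c : ℝ → ℝ := fun r => (p r * vp r + q r * vq r) / (r * R2 r)
  have hR2d : ∀ r ∈ Icc lo hi, HasDerivWithinAt R2 (2 * c r * R2 r) (Icc lo hi) r := by
    intro r hr
    refine (((hp r hr).pow 2).add ((hq r hr).pow 2)).congr_deriv ?_
    have h1 := (hpos r hr).ne'
    have h2 := (hR2pos r hr).ne'
    simp only [c]
    field_simp
    push_cast
    ring
  have hfd : ∀ r ∈ Icc lo hi, HasDerivWithinAt f (c r * f r) (Icc lo hi) r := by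
    intro r hr
    refine ((hR2d r hr).sqrt (hR2pos r hr).ne').congr_deriv ?_
    have h1 := (hfpos r hr).ne'
    have h2 := hfsq r hr
    change 2 * c r * R2 r / (2 * f r) = _
    rw [← h2]
    field_simp
  have hpd : ∀ r ∈ Icc lo hi, vp r / r = c r * p r - H r * q r := by
    intro r hr
    have h1 := (hpos r hr).ne'
    have h2 := (hR2pos r hr).ne'
    rw [hHeq r hr]
    simp only [c]
    field_simp
    simp only [R2]
    linear_combination (-q r) * hW r hr
  have hqd : ∀ r ∈ Icc lo hi, vq r / r = c r * q r + H r * p r := by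
    intro r hr
    have h1 := (hpos r hr).ne'
    have h2 := (hR2pos r hr).ne'
    rw [hHeq r hr]
    simp only [c]
    field_simp
    simp only [R2]
    linear_combination (p r) * hW r hr
  let X : ℝ → ℝ := fun r => p r - f r * Real.cos (α r)
  let Y : ℝ → ℝ := fun r => q r - f r * Real.sin (α r)
  have hX : ∀ r ∈ Icc lo hi, HasDerivWithinAt X (c r * X r - H r * Y r) (Icc lo hi) r := by
    intro r hr
    refine ((hp r hr).sub ((hfd r hr).mul (hα r).cos.hasDerivWithinAt)).congr_deriv ?_
    rw [hpd r hr]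
    simp only [X, Y]
    ring
  have hY : ∀ r ∈ Icc lo hi, HasDerivWithinAt Y (c r * Y r + H r * X r) (Icc lo hi) r := by
    intro r hr
    refine ((hq r hr).sub ((hfd r hr).mul (hα r).sin.hasDerivWithinAt)).congr_deriv ?_
    rw [hqd r hr]
    simp only [X, Y]
    ring
  have hflo : f lo = 1 := by simp [f, R2, hp0, hq0]
  have hXY : ∀ r ∈ Icc lo hi, (X r ^ 2 + Y r ^ 2) / R2 r = 0 := by
    intro r hr
    have := const_on_Icc (f := fun r => (X r ^ 2 + Y r ^ 2) / R2 r)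
      (fun r hr => (((hX r hr).pow 2).add ((hY r hr).pow 2)).div (hR2d r hr) (hR2pos r hr).ne')
      (fun r hr => by
        simp only [Pi.add_apply, Pi.pow_apply]
        push_cast
        ring) r hr
    simp only [this]
    simp [X, Y, hα0, hflo, hp0, hq0]
  have hXY' : ∀ r ∈ Icc lo hi, p r = f r * Real.cos (α r) ∧ q r = f r * Real.sin (α r) := by
    intro r hr
    have h := hXY r hr
    rw [div_eq_zero_iff, or_iff_left (hR2pos r hr).ne'] at h
    have h1 : X r = 0 := by nlinarith [sq_nonneg (X r), sq_nonneg (Y r)]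
    have h2 : Y r = 0 := by nlinarith [sq_nonneg (X r), sq_nonneg (Y r)]
    exact ⟨by simp only [X] at h1; linarith, by simp only [Y] at h2; linarith⟩
  have hIoo : ∀ r ∈ Ioo lo hi, r ∈ Icc lo hi := fun r hr => ⟨hr.1.le, hr.2.le⟩
  have hnhds : ∀ r ∈ Ioo lo hi, Icc lo hi ∈ nhds r := fun r hr => Icc_mem_nhds hr.1 hr.2
  have hαc : ContinuousOn α (Ioo lo hi) := fun r _ => (hα r).continuousAt.continuousWithinAt
  refine ⟨α, fun s r => p s * q r - q s * p r, fun s r => p s * vq r - q s * vp r, ?_, hαc,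
    ?_, ?_, ?_, ?_⟩
  · apply strictMonoOn_of_deriv_pos (convex_Ioo lo hi) hαc
    intro x hx
    rw [interior_Ioo] at hx
    rw [(hα x).deriv, hHeq x (hIoo x hx)]
    have := hpos x (hIoo x hx)
    have := hR2pos x (hIoo x hx)
    positivity
  · intro s hs r hr
    refine ((((hq r (hIoo r hr)).hasDerivAt (hnhds r hr)).const_mul (p s)).sub
      (((hp r (hIoo r hr)).hasDerivAt (hnhds r hr)).const_mul (q s))).congr_deriv ?_
    ring
  · intro s hs r hr
    refine ((((hvq r (hIoo r hr)).hasDerivAt (hnhds r hr)).const_mul (p s)).sub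
      (((hvp r (hIoo r hr)).hasDerivAt (hnhds r hr)).const_mul (q s))).congr_deriv ?_
    ring
  · intro s hs r hr
    refine ⟨f s * f r, mul_pos (hfpos s (hIoo s hs)) (hfpos r (hIoo r hr)), ?_⟩
    obtain ⟨h1, h2⟩ := hXY' s (hIoo s hs)
    obtain ⟨h3, h4⟩ := hXY' r (hIoo r hr)
    simp only [h1, h2, h3, h4, Real.sin_sub]
    ring
  · intro s hs r hr h0
    have hfr := hfpos r (hIoo r hr)
    refine ⟨f s / f r, div_pos (hfpos s (hIoo s hs)) hfr, ?_⟩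
    obtain ⟨h1, h2⟩ := hXY' s (hIoo s hs)
    obtain ⟨h3, h4⟩ := hXY' r (hIoo r hr)
    have hw := hW r (hIoo r hr)
    have e : α s = α r - (α r - α s) := by ring
    have hc : Real.cos (α s) = Real.cos (α r) * Real.cos (α r - α s) := by
      conv_lhs => rw [e, Real.cos_sub, h0]
      ring
    have hs' : Real.sin (α s) = Real.sin (α r) * Real.cos (α r - α s) := by
      conv_lhs => rw [e, Real.sin_sub, h0]
      ring
    rw [h3, h4] at hw
    rw [h1, h2, hc, hs']
    have := hfr.ne'
    field_simp
    linear_combination hw * f s * Real.cos (α r - α s)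


namespace PhaseSys

variable {k lo hi : ℝ} {α : ℝ → ℝ} {D V : ℝ → ℝ → ℝ}

lemma D_self (h : PhaseSys k lo hi α D V) {s : ℝ} (hs : s ∈ Ioo lo hi) : D s s = 0 := by
  obtain ⟨g, _, hg⟩ := h.sinD s hs s hs
  simpa using hg

lemma V_self (h : PhaseSys k lo hi α D V) {s : ℝ} (hs : s ∈ Ioo lo hi) : 0 < V s s := by
  obtain ⟨g, hg0, hg⟩ := h.cosV s hs s hs (by simp)
  simpa [hg] using hg0

lemma D_pos (h : PhaseSys k lo hi α D V) {s r : ℝ} (hs : s ∈ Ioo lo hi) (hr : r ∈ Ioo lo hi)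
    (hsr : s < r) (hr2 : α r < α s + Real.pi) : 0 < D s r := by
  obtain ⟨g, hg0, hg⟩ := h.sinD s hs r hr
  rw [hg]
  have := h.mono hs hr hsr
  exact mul_pos hg0 (Real.sin_pos_of_pos_of_lt_pi (by linarith) (by linarith))

lemma wronskian (h : PhaseSys k lo hi α D V) {s r : ℝ} (hs : s ∈ Ioo lo hi)
    (hr : r ∈ Ioo lo hi) {P Q : ℝ → ℝ} {G : ℝ}
    (hP : HasDerivAt P (Q r / r) r) (hQ : HasDerivAt Q G r) :
    HasDerivAt (fun r => D s r * Q r - P r * V s r)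
      (D s r * (G - (k ^ 2 - r ^ 2) / r * P r)) r := by
  refine (((h.dD s hs r hr).mul hQ).sub (hP.mul (h.dV s hs r hr))).congr_deriv ?_
  ring

/-- Sturm comparison with a subsolution vanishing at both end points. -/
lemma sub (h : PhaseSys k lo hi α D V) {x y : ℝ} (hx : x ∈ Ioo lo hi) (hy : y ∈ Ioo lo hi)
    (hxy : x < y) {P Q G : ℝ → ℝ}
    (hP : ∀ r ∈ Icc x y, HasDerivAt P (Q r / r) r) (hQ : ∀ r ∈ Icc x y, HasDerivAt Q (G r) r)
    (hG : ∀ r ∈ Ioo x y, (k ^ 2 - r ^ 2) / r * P r ≤ G r)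
    (hPx : P x = 0) (hPy : P y = 0) (hQy : Q y < 0) : α x + Real.pi ≤ α y := by
  by_contra hcon
  push Not at hcon
  have hmem : ∀ r ∈ Icc x y, r ∈ Ioo lo hi := fun r hr =>
    ⟨hx.1.trans_le hr.1, hr.2.trans_lt hy.2⟩
  have hD : ∀ r ∈ Icc x y, HasDerivAt (fun r => D x r * Q r - P r * V x r) _ r := fun r hr =>
    h.wronskian hx (hmem r hr) (hP r hr) (hQ r hr)
  have hmono : MonotoneOn (fun r => D x r * Q r - P r * V x r) (Icc x y) := by
    apply monotoneOn_of_deriv_nonneg (convex_Icc x y)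
    · exact fun r hr => (hD r hr).continuousAt.continuousWithinAt
    · rw [interior_Icc]
      exact fun r hr => (hD r ⟨hr.1.le, hr.2.le⟩).differentiableAt.differentiableWithinAt
    · rw [interior_Icc]
      intro r hr
      have hr' : r ∈ Icc x y := ⟨hr.1.le, hr.2.le⟩
      rw [(hD r hr').deriv]
      apply mul_nonneg
      · exact (h.D_pos hx (hmem r hr') hr.1
          (((h.mono.monotoneOn (hmem r hr') hy hr.2.le)).trans_lt hcon)).le
      · linarith [hG r hr]
  have h1 := hmono ⟨le_refl _, hxy.le⟩ ⟨hxy.le, le_refl _⟩ hxy.le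
  simp only [hPx, hPy, h.D_self hx] at h1
  have h2 := h.D_pos hx hy hxy hcon
  nlinarith

/-- Sturm comparison with a nonnegative strict supersolution. -/
lemma super (h : PhaseSys k lo hi α D V) {x y : ℝ} (hx : x ∈ Ioo lo hi) (hy : y ∈ Ioo lo hi)
    (hxy : x < y) {P Q G : ℝ → ℝ}
    (hP : ∀ r ∈ Icc x y, HasDerivAt P (Q r / r) r) (hQ : ∀ r ∈ Icc x y, HasDerivAt Q (G r) r)
    (hG : ∀ r ∈ Ioo x y, G r < (k ^ 2 - r ^ 2) / r * P r)
    (hP0 : ∀ r ∈ Icc x y, 0 ≤ P r) : α y < α x + Real.pi := by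
  by_contra hcon
  push Not at hcon
  have hmem : ∀ r ∈ Icc x y, r ∈ Ioo lo hi := fun r hr =>
    ⟨hx.1.trans_le hr.1, hr.2.trans_lt hy.2⟩
  obtain ⟨c, hc, hαc⟩ : α x + Real.pi ∈ α '' Icc x y :=
    intermediate_value_Icc hxy.le (h.cont.mono hmem) ⟨by linarith [Real.pi_pos], hcon⟩
  have hcm := hmem c hc
  have hxc : x < c := by
    rw [← h.mono.lt_iff_lt hx hcm]
    linarith [Real.pi_pos]
  have hD : ∀ r ∈ Icc x c, HasDerivAt (fun r => D x r * Q r - P r * V x r) _ r := fun r hr =>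
    h.wronskian hx (hmem r ⟨hr.1, hr.2.trans hc.2⟩) (hP r ⟨hr.1, hr.2.trans hc.2⟩)
      (hQ r ⟨hr.1, hr.2.trans hc.2⟩)
  have hanti : StrictAntiOn (fun r => D x r * Q r - P r * V x r) (Icc x c) := by
    apply strictAntiOn_of_deriv_neg (convex_Icc x c)
    · exact fun r hr => (hD r hr).continuousAt.continuousWithinAt
    · rw [interior_Icc]
      intro r hr
      have hr' : r ∈ Icc x c := ⟨hr.1.le, hr.2.le⟩
      have hrm := hmem r ⟨hr.1.le, hr.2.le.trans hc.2⟩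
      rw [(hD r hr').deriv]
      apply mul_neg_of_pos_of_neg
      · exact h.D_pos hx hrm hr.1 (by rw [← hαc]; exact h.mono hrm hcm hr.2)
      · linarith [hG r ⟨hr.1, hr.2.trans_le hc.2⟩]
  have h1 := hanti ⟨le_refl _, hxc.le⟩ ⟨hxc.le, le_refl _⟩ hxc
  have e : α c - α x = Real.pi := by linarith
  obtain ⟨g, hg0, hg⟩ := h.sinD x hx c hcm
  obtain ⟨g', hg0', hg'⟩ := h.cosV x hx c hcm (by rw [e]; simp)
  rw [e] at hg hg'
  simp only [Real.sin_pi, Real.cos_pi, mul_zero] at hg hg'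
  simp only [h.D_self hx, hg, hg'] at h1
  have h2 := mul_nonneg (hP0 x ⟨le_refl _, hxy.le⟩) (h.V_self hx).le
  have h3 := mul_nonneg (hP0 c hc) hg0'.le
  nlinarith

/-- Phases grow more slowly for larger angular mode. -/
lemma lt_of_mode (h : PhaseSys k lo hi α D V) {k' : ℝ} {α' : ℝ → ℝ} {D' V' : ℝ → ℝ → ℝ}
    (h' : PhaseSys k' lo hi α' D' V') (hlo : 0 < lo) (hk : k ^ 2 < k' ^ 2) {x y : ℝ}
    (hx : x ∈ Ioo lo hi) (hy : y ∈ Ioo lo hi)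
    (hxy : x < y) (hα : α y = α x + Real.pi) : α' y < α' x + Real.pi := by
  have hmem : ∀ r ∈ Icc x y, r ∈ Ioo lo hi := fun r hr =>
    ⟨hx.1.trans_le hr.1, hr.2.trans_lt hy.2⟩
  have hpos : ∀ r ∈ Ioo x y, 0 < D x r := fun r hr => by
    have hr' := hmem r ⟨hr.1.le, hr.2.le⟩
    exact h.D_pos hx hr' hr.1 (by rw [← hα]; exact h.mono hr' hy hr.2)
  apply h'.super hx hy hxy (P := D x) (Q := V x) (fun r hr => h.dD x hx r (hmem r hr))
    (fun r hr => h.dV x hx r (hmem r hr))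
  · intro r hr
    have hr' := hmem r ⟨hr.1.le, hr.2.le⟩
    have hr0 : 0 < r := hlo.trans hr'.1
    have := hpos r hr
    gcongr
  · intro r hr
    rcases eq_or_lt_of_le hr.1 with h1 | h1
    · rw [← h1, h.D_self hx]
    rcases eq_or_lt_of_le hr.2 with h2 | h2
    · obtain ⟨g, hg0, hg⟩ := h.sinD x hx r (hmem r hr)
      rw [hg, h2, hα]
      simp
    · exact (hpos r ⟨h1, h2⟩).le

/-- Comparison functions `sin (ω (r - b)) / √r`. -/
lemma sin_test (ω b r : ℝ) (hr : 0 < r) :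
    HasDerivAt (fun r => Real.sin (ω * (r - b)) / √r)
      ((-(1 / 2) * (Real.sin (ω * (r - b)) / √r) + ω * √r * Real.cos (ω * (r - b))) / r) r ∧
    HasDerivAt (fun r => -(1 / 2) * (Real.sin (ω * (r - b)) / √r)
        + ω * √r * Real.cos (ω * (r - b)))
      ((1 / 4 - ω ^ 2 * r ^ 2) / r * (Real.sin (ω * (r - b)) / √r)) r := by
  have hs : HasDerivAt (fun r => √r) (1 / (2 * √r)) r := Real.hasDerivAt_sqrt hr.ne'
  have hl : HasDerivAt (fun r => ω * (r - b)) ω r := by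
    simpa using ((hasDerivAt_id r).sub_const b).const_mul ω
  have hq : 0 < √r := Real.sqrt_pos.2 hr
  have hq2 : r = √r ^ 2 := (Real.sq_sqrt hr.le).symm
  have h1 : HasDerivAt (fun r => Real.sin (ω * (r - b)) / √r)
      ((-(1 / 2) * (Real.sin (ω * (r - b)) / √r) + ω * √r * Real.cos (ω * (r - b))) / r) r := by
    refine (hl.sin.div hs hq.ne').congr_deriv ?_
    generalize Real.sin (ω * (r - b)) = S
    generalize Real.cos (ω * (r - b)) = C
    generalize √r = t at *
    subst hq2
    field_simp
    ring
  refine ⟨h1, ?_⟩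
  refine ((h1.const_mul (-(1 / 2))).add ((hs.const_mul ω).mul hl.cos)).congr_deriv ?_
  generalize Real.sin (ω * (r - b)) = S
  generalize Real.cos (ω * (r - b)) = C
  generalize √r = t at *
  subst hq2
  field_simp
  ring

/-- If `(π/(y-x))² ≤ 1 - (k² - 1/4)/x²`, the phase grows by at least `π` on `[x,y]`. -/
lemma sin_sub (h : PhaseSys k lo hi α D V) (hlo : 0 < lo) {x y ω : ℝ} (hx : x ∈ Ioo lo hi)
    (hy : y ∈ Ioo lo hi) (hxy : x < y) (hω : ω * (y - x) = Real.pi)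
    (hk : 1 / 4 ≤ k ^ 2)
    (hω2 : ω ^ 2 * x ^ 2 ≤ x ^ 2 - (k ^ 2 - 1 / 4)) : α x + Real.pi ≤ α y := by
  have hx0 : 0 < x := hlo.trans hx.1
  have hω0 : 0 < ω := by
    by_contra hcon
    have := Real.pi_pos
    nlinarith
  have hω1 : ω ^ 2 ≤ 1 := by
    by_contra hcon
    push Not at hcon
    nlinarith [sq_pos_of_pos hx0]
  apply h.sub hx hy hxy (P := fun r => Real.sin (ω * (r - x)) / √r)
    (fun r hr => (sin_test ω x r (hx0.trans_le hr.1)).1)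
    (fun r hr => (sin_test ω x r (hx0.trans_le hr.1)).2)
  · intro r hr
    have hr0 : 0 < r := hx0.trans hr.1
    have h1 : 0 ≤ Real.sin (ω * (r - x)) := by
      apply Real.sin_nonneg_of_nonneg_of_le_pi
      · exact mul_nonneg hω0.le (by linarith [hr.1])
      · rw [← hω]
        exact mul_le_mul_of_nonneg_left (by linarith [hr.2]) hω0.le
    apply mul_le_mul_of_nonneg_right _ (by positivity)
    apply div_le_div_of_nonneg_right _ hr0.le
    have : x ^ 2 ≤ r ^ 2 := pow_le_pow_left₀ hx0.le hr.1.le 2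
    nlinarith
  · simp
  · simp [hω]
  · have : 0 < √y := Real.sqrt_pos.2 (hx0.trans hxy)
    simp only [hω]
    simp
    positivity

/-- For mode one, the phase grows by less than `π` on any interval of length `3`. -/
lemma sin_super (h : PhaseSys 1 lo hi α D V) (hlo : 0 < lo) {x : ℝ} (hx : x ∈ Ioo lo hi)
    (hy : x + 3 ∈ Ioo lo hi) : α (x + 3) < α x + Real.pi := by
  have hx0 : 0 < x := hlo.trans hx.1
  have hpos : ∀ r ∈ Icc x (x + 3), 0 < Real.sin (1 * (r - (x - 1 / 20))) / √r := by
    intro r hr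
    have hr0 : 0 < √r := Real.sqrt_pos.2 (hx0.trans_le hr.1)
    have hpi := Real.pi_gt_d2
    refine div_pos (Real.sin_pos_of_pos_of_lt_pi ?_ ?_) hr0
    · linarith [hr.1]
    · linarith [hr.2]
  apply h.super hx hy (by linarith) (P := fun r => Real.sin (1 * (r - (x - 1 / 20))) / √r)
    (fun r hr => (sin_test 1 (x - 1 / 20) r (hx0.trans_le hr.1)).1)
    (fun r hr => (sin_test 1 (x - 1 / 20) r (hx0.trans_le hr.1)).2)
  · intro r hr
    have hr0 : 0 < r := hx0.trans hr.1
    have := hpos r ⟨hr.1.le, hr.2.le⟩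
    apply mul_lt_mul_of_pos_right _ this
    apply div_lt_div_of_pos_right _ hr0
    nlinarith
  · exact fun r hr => (hpos r hr).le

end PhaseSys


namespace PhaseSys

variable {k lo hi : ℝ} {α : ℝ → ℝ} {D V : ℝ → ℝ → ℝ}

/-- Polynomial subsolution for mode one on `[1/10, 4]`. -/
lemma poly_sub (h : PhaseSys 1 lo hi α D V) (hx : (1 / 10 : ℝ) ∈ Ioo lo hi)
    (hy : (4 : ℝ) ∈ Ioo lo hi) : α (1 / 10) + Real.pi ≤ α 4 := by
  have hpw : ∀ (c : ℝ) (n : ℕ) (r : ℝ),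
      HasDerivAt (fun r => c * r ^ n) (c * (n * r ^ (n - 1))) r :=
    fun c n r => (hasDerivAt_pow n r).const_mul c
  let A : ℝ := 1930109702359 / 18432000000000
  let B : ℝ := 3568509702359 / 73728000000000
  apply h.sub hx hy (by norm_num)
    (P := fun r => -A + ((1 + B) * r ^ 1 + (-1 / 8) * r ^ 3 + (1 / 192) * r ^ 5
      + (-1 / 9216) * r ^ 7 + (1 / 737280) * r ^ 9))
    (Q := fun r => (1 + B) * r ^ 1 + (-3 / 8) * r ^ 3 + (5 / 192) * r ^ 5
      + (-7 / 9216) * r ^ 7 + (9 / 737280) * r ^ 9)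
    (G := fun r => (1 + B) + (-9 / 8) * r ^ 2 + (25 / 192) * r ^ 4
      + (-49 / 9216) * r ^ 6 + (81 / 737280) * r ^ 8)
  · intro r hr
    have hr0 : 0 < r := by linarith [hr.1]
    refine (((((hpw _ 1 r).add (hpw _ 3 r)).add (hpw _ 5 r)).add (hpw _ 7 r)).add
      (hpw _ 9 r)).const_add _ |>.congr_deriv ?_
    field_simp
    push_cast
    ring
  · intro r hr
    refine (((((hpw _ 1 r).add (hpw _ 3 r)).add (hpw _ 5 r)).add (hpw _ 7 r)).add
      (hpw _ 9 r)).congr_deriv ?_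
    push_cast
    ring
  · intro r hr
    have hr0 : 0 < r := by linarith [hr.1]
    rw [div_mul_eq_mul_div, div_le_iff₀ hr0]
    have key : 0 ≤ A * (1 - r ^ 2) + B * r ^ 3 + r ^ 11 / 737280 := by
      have h1 : 0 ≤ 1 - r ^ 2 + 2 / 5 * r ^ 3 := by
        nlinarith [mul_nonneg hr0.le (sq_nonneg (r - 5 / 3)), sq_nonneg (r - 5 / 3)]
      have h2 : 0 ≤ r ^ 3 := by positivity
      have h3 : 0 ≤ r ^ 11 / 737280 := by positivity
      have h4 : 2 / 5 * A ≤ B := by norm_num [A, B]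
      have h5 : 0 < A := by norm_num [A]
      nlinarith [mul_nonneg h5.le h1, mul_nonneg (sub_nonneg.2 h4) h2]
    linear_combination key
  · norm_num [A, B]
  · norm_num [A, B]
  · norm_num [A, B]

/-- Polynomial supersolution for modes `k ≥ 4` on `[1/10, 29/4]`. -/
lemma poly_super (h : PhaseSys k lo hi α D V) (hk : 4 ≤ k) (hx : (1 / 10 : ℝ) ∈ Ioo lo hi)
    (hy : (29 / 4 : ℝ) ∈ Ioo lo hi) : α (29 / 4) < α (1 / 10) + Real.pi := by
  have hpw : ∀ (c : ℝ) (n : ℕ) (r : ℝ),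
      HasDerivAt (fun r => c * r ^ n) (c * (n * r ^ (n - 1))) r :=
    fun c n r => (hasDerivAt_pow n r).const_mul c
  have hpos : ∀ r ∈ Icc (1 / 10 : ℝ) (29 / 4), 0 <
      8382528000 * r ^ 4 + (-1676505600 / 4) * r ^ 6 + (139708800 / 4 ^ 2) * r ^ 8
      + (-6652800 / 4 ^ 3) * r ^ 10 + (207900 / 4 ^ 4) * r ^ 12 + (-4620 / 4 ^ 5) * r ^ 14
      + (77 / 4 ^ 6) * r ^ 16 + (-1 / 4 ^ 7) * r ^ 18 := by
    intro r hr
    have hr0 : 0 < r := by linarith [hr.1]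
    obtain ⟨w, hw⟩ : ∃ w, w = 66 / 5 - r ^ 2 / 4 := ⟨_, rfl⟩
    have hw0 : 0 ≤ w := by
      have := hr.2
      nlinarith
    have hz : r ^ 2 = 4 * (66 / 5 - w) := by linarith
    have h1 : 0 < 7194421327104 / 78125 + 1660654239552 / 15625 * w + 43737536304 / 3125 * w ^ 2
        + 155775312 / 125 * w ^ 3 + 593208 / 25 * w ^ 4
        + w ^ 5 * ((w - 77 / 10) ^ 2 + (54516 / 25 - (77 / 10) ^ 2)) := by
      have h2 : (0 : ℝ) < 54516 / 25 - (77 / 10) ^ 2 := by norm_num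
      positivity
    have h2 : 0 < r ^ 4 * (7194421327104 / 78125 + 1660654239552 / 15625 * w
        + 43737536304 / 3125 * w ^ 2 + 155775312 / 125 * w ^ 3 + 593208 / 25 * w ^ 4
        + w ^ 5 * ((w - 77 / 10) ^ 2 + (54516 / 25 - (77 / 10) ^ 2))) := by positivity
    rw [hw] at h2
    linear_combination h2
  apply h.super hx hy (by norm_num)
    (P := fun r => 8382528000 * r ^ 4 + (-1676505600 / 4) * r ^ 6 + (139708800 / 4 ^ 2) * r ^ 8
      + (-6652800 / 4 ^ 3) * r ^ 10 + (207900 / 4 ^ 4) * r ^ 12 + (-4620 / 4 ^ 5) * r ^ 14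
      + (77 / 4 ^ 6) * r ^ 16 + (-1 / 4 ^ 7) * r ^ 18)
    (Q := fun r => (4 * 8382528000) * r ^ 4 + (6 * (-1676505600 / 4)) * r ^ 6
      + (8 * (139708800 / 4 ^ 2)) * r ^ 8 + (10 * (-6652800 / 4 ^ 3)) * r ^ 10
      + (12 * (207900 / 4 ^ 4)) * r ^ 12 + (14 * (-4620 / 4 ^ 5)) * r ^ 14
      + (16 * (77 / 4 ^ 6)) * r ^ 16 + (18 * (-1 / 4 ^ 7)) * r ^ 18)
    (G := fun r => (16 * 8382528000) * r ^ 3 + (36 * (-1676505600 / 4)) * r ^ 5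
      + (64 * (139708800 / 4 ^ 2)) * r ^ 7 + (100 * (-6652800 / 4 ^ 3)) * r ^ 9
      + (144 * (207900 / 4 ^ 4)) * r ^ 11 + (196 * (-4620 / 4 ^ 5)) * r ^ 13
      + (256 * (77 / 4 ^ 6)) * r ^ 15 + (324 * (-1 / 4 ^ 7)) * r ^ 17)
  · intro r hr
    have hr0 : 0 < r := by linarith [hr.1]
    refine ((((((((hpw _ 4 r).add (hpw _ 6 r)).add (hpw _ 8 r)).add (hpw _ 10 r)).add
      (hpw _ 12 r)).add (hpw _ 14 r)).add (hpw _ 16 r)).add (hpw _ 18 r)).congr_deriv ?_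
    field_simp
    push_cast
    ring
  · intro r hr
    refine ((((((((hpw _ 4 r).add (hpw _ 6 r)).add (hpw _ 8 r)).add (hpw _ 10 r)).add
      (hpw _ 12 r)).add (hpw _ 14 r)).add (hpw _ 16 r)).add (hpw _ 18 r)).congr_deriv ?_
    push_cast
    ring
  · intro r hr
    have hr0 : 0 < r := by linarith [hr.1]
    have hp := hpos r ⟨hr.1.le, hr.2.le⟩
    rw [div_mul_eq_mul_div, lt_div_iff₀ hr0]
    have h1 : 0 < r ^ 20 := by positivity
    have h2 := mul_nonneg (by nlinarith : 0 ≤ k ^ 2 - 16) hp.le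
    linear_combination h2 + (1 / 4 ^ 7) * h1
  · exact fun r hr => (hpos r hr).le

end PhaseSys

/-- The crossing of the two phase conditions. -/
lemma phase_crossing (l : ℝ) (hl : 4 ≤ l) {α₁ αl : ℝ → ℝ} {D₁ V₁ Dl Vl : ℝ → ℝ → ℝ}
    (h₁ : PhaseSys 1 (1 / 20) (2 * l + 13) α₁ D₁ V₁)
    (hL : PhaseSys l (1 / 20) (2 * l + 13) αl Dl Vl) :
    ∃ s ∈ Ioo (1 / 20) (2 * l + 13), ∃ y ∈ Ioo (1 / 20) (2 * l + 13), s < y ∧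
      α₁ y = α₁ s + 2 * Real.pi ∧ αl y = αl s + Real.pi := by
  have hlo : (0 : ℝ) < 1 / 20 := by norm_num
  have hpi := Real.pi_lt_d2
  have hpi0 := Real.pi_pos
  have m : ∀ x : ℝ, 1 / 10 ≤ x → x ≤ 2 * l + 12 → x ∈ Ioo (1 / 20 : ℝ) (2 * l + 13) :=
    fun x h1 h2 => ⟨by linarith, by linarith⟩
  have F1 : α₁ (1 / 10) + 2 * Real.pi ≤ α₁ (29 / 4) := by
    have e1 := h₁.poly_sub (m _ (by linarith) (by linarith)) (m _ (by linarith) (by linarith))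
    have e2 := h₁.sin_sub hlo (x := 4) (y := 29 / 4) (ω := Real.pi / (13 / 4))
      (m _ (by linarith) (by linarith)) (m _ (by linarith) (by linarith)) (by norm_num)
      (by ring) (by norm_num) (by nlinarith)
    linarith
  have F2 : αl (29 / 4) < αl (1 / 10) + Real.pi :=
    hL.poly_super hl (m _ (by linarith) (by linarith)) (m _ (by linarith) (by linarith))
  have F3 : α₁ (2 * l + 6) < α₁ (2 * l) + 2 * Real.pi := by
    have e1 := h₁.sin_super hlo (x := 2 * l)
      (m _ (by linarith) (by linarith)) (m _ (by linarith) (by linarith))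
    have e2 := h₁.sin_super hlo (x := 2 * l + 3)
      (m _ (by linarith) (by linarith)) (m _ (by linarith) (by linarith))
    rw [show 2 * l + 3 + 3 = 2 * l + 6 by ring] at e2
    linarith
  have hω : (Real.pi / 6) ^ 2 ≤ 3 / 10 := by nlinarith
  have F4 : αl (2 * l) + Real.pi ≤ αl (2 * l + 6) := by
    apply hL.sin_sub hlo (ω := Real.pi / 6)
      (m _ (by linarith) (by linarith)) (m _ (by linarith) (by linarith)) (by linarith)
      (by ring) (by nlinarith)
    nlinarith [mul_le_mul_of_nonneg_right hω (sq_nonneg (2 * l))]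
  have F5 : α₁ (2 * l) + 2 * Real.pi ≤ α₁ (2 * l + 12) := by
    have e1 := h₁.sin_sub hlo (ω := Real.pi / 6) (x := 2 * l) (y := 2 * l + 6)
      (m _ (by linarith) (by linarith)) (m _ (by linarith) (by linarith)) (by linarith)
      (by ring) (by norm_num) (by nlinarith [mul_le_mul_of_nonneg_right hω (sq_nonneg (2 * l))])
    have e2 := h₁.sin_sub hlo (ω := Real.pi / 6) (x := 2 * l + 6) (y := 2 * l + 12)
      (m _ (by linarith) (by linarith)) (m _ (by linarith) (by linarith)) (by linarith)
      (by ring) (by norm_num)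
      (by nlinarith [mul_le_mul_of_nonneg_right hω (sq_nonneg (2 * l + 6))])
    linarith
  -- the two closed sets
  have hsub : Icc (1 / 10 : ℝ) (2 * l + 12) ⊆ Ioo (1 / 20 : ℝ) (2 * l + 13) :=
    fun x hx => m x hx.1 hx.2
  have hsub' : Icc (1 / 10 : ℝ) (2 * l) ⊆ Ioo (1 / 20 : ℝ) (2 * l + 13) :=
    fun x hx => m x hx.1 (by linarith [hx.2])
  let K : Set (ℝ × ℝ) := Icc (1 / 10 : ℝ) (2 * l) ×ˢ Icc (1 / 10 : ℝ) (2 * l + 12)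
  have hK : IsCompact K := isCompact_Icc.prod isCompact_Icc
  have c1 : ContinuousOn (fun z : ℝ × ℝ => α₁ z.2 - α₁ z.1) K :=
    ((h₁.cont.mono hsub).comp continuousOn_snd (fun z hz => hz.2)).sub
      ((h₁.cont.mono hsub').comp continuousOn_fst (fun z hz => hz.1))
  have cl : ContinuousOn (fun z : ℝ × ℝ => αl z.2 - αl z.1) K :=
    ((hL.cont.mono hsub).comp continuousOn_snd (fun z hz => hz.2)).sub
      ((hL.cont.mono hsub').comp continuousOn_fst (fun z hz => hz.1))
  let U : Set (ℝ × ℝ) := (K ∩ (fun z : ℝ × ℝ => α₁ z.2 - α₁ z.1) ⁻¹' Ici (2 * Real.pi)) ∩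
    (K ∩ (fun z : ℝ × ℝ => αl z.2 - αl z.1) ⁻¹' Iic Real.pi)
  let W : Set (ℝ × ℝ) := (K ∩ (fun z : ℝ × ℝ => α₁ z.2 - α₁ z.1) ⁻¹' Iic (2 * Real.pi)) ∩
    (K ∩ (fun z : ℝ × ℝ => αl z.2 - αl z.1) ⁻¹' Ici Real.pi)
  have hU : IsCompact U := hK.of_isClosed_subset
    ((c1.preimage_isClosed_of_isClosed hK.isClosed isClosed_Ici).inter
      (cl.preimage_isClosed_of_isClosed hK.isClosed isClosed_Iic)) (fun z hz => hz.1.1)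
  have hW : IsCompact W := hK.of_isClosed_subset
    ((c1.preimage_isClosed_of_isClosed hK.isClosed isClosed_Iic).inter
      (cl.preimage_isClosed_of_isClosed hK.isClosed isClosed_Ici)) (fun z hz => hz.1.1)
  have hcover : Icc (1 / 10 : ℝ) (2 * l) ⊆ (Prod.fst '' U) ∪ (Prod.fst '' W) := by
    intro s hs
    have hsm := hsub' hs
    have hTm : 2 * l + 12 ∈ Ioo (1 / 20 : ℝ) (2 * l + 13) := m _ (by linarith) (by linarith)
    have hle : α₁ s ≤ α₁ (2 * l) :=
      h₁.mono.monotoneOn hsm (m _ (by linarith) (by linarith)) hs.2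
    obtain ⟨y, hy, hαy⟩ : α₁ s + 2 * Real.pi ∈ α₁ '' Icc s (2 * l + 12) :=
      intermediate_value_Icc (by linarith [hs.2])
        (h₁.cont.mono fun x hx => m x (hs.1.trans hx.1) hx.2)
        ⟨by linarith, by linarith⟩
    have hz : (s, y) ∈ K := ⟨hs, hs.1.trans hy.1, hy.2⟩
    rcases le_total (αl y - αl s) Real.pi with hc | hc
    · left
      refine ⟨(s, y), ⟨⟨hz, ?_⟩, ⟨hz, hc⟩⟩, rfl⟩
      change 2 * Real.pi ≤ α₁ y - α₁ s
      linarith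
    · right
      refine ⟨(s, y), ⟨⟨hz, ?_⟩, ⟨hz, hc⟩⟩, rfl⟩
      change α₁ y - α₁ s ≤ 2 * Real.pi
      linarith
  have hconn : IsPreconnected (Icc (1 / 10 : ℝ) (2 * l)) := isPreconnected_Icc
  rw [isPreconnected_closed_iff] at hconn
  obtain ⟨s, hs, ⟨⟨s', y⟩, hy, rfl⟩, ⟨⟨s'', y'⟩, hy', hss⟩⟩ := hconn _ _
    (hU.image continuous_fst).isClosed (hW.image continuous_fst).isClosed hcover
    ⟨1 / 10, ⟨le_refl _, by linarith⟩, (1 / 10, 29 / 4), by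
      have hz : ((1 / 10 : ℝ), (29 / 4 : ℝ)) ∈ K :=
        ⟨⟨le_refl _, by linarith⟩, ⟨by norm_num, by linarith⟩⟩
      refine ⟨⟨hz, ?_⟩, ⟨hz, ?_⟩⟩
      · change 2 * Real.pi ≤ α₁ (29 / 4) - α₁ (1 / 10)
        linarith
      · change αl (29 / 4) - αl (1 / 10) ≤ Real.pi
        linarith, rfl⟩
    ⟨2 * l, ⟨by linarith, le_refl _⟩, (2 * l, 2 * l + 6), by
      have hz : (2 * l, 2 * l + 6) ∈ K :=
        ⟨⟨by linarith, le_refl _⟩, ⟨by linarith, by linarith⟩⟩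
      refine ⟨⟨hz, ?_⟩, ⟨hz, ?_⟩⟩
      · change α₁ (2 * l + 6) - α₁ (2 * l) ≤ 2 * Real.pi
        linarith
      · change Real.pi ≤ αl (2 * l + 6) - αl (2 * l)
        linarith, rfl⟩
  simp only at hss hs
  subst hss
  obtain ⟨⟨hz, ha⟩, ⟨_, hb⟩⟩ := hy
  obtain ⟨⟨hz', ha'⟩, ⟨_, hb'⟩⟩ := hy'
  simp only [mem_preimage, mem_Ici, mem_Iic] at ha hb ha' hb'
  have hsm := hsub' hs
  have hym := hsub hz.2
  have hym' := hsub hz'.2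
  simp only at hym hym'
  have e1 : y' ≤ y := (h₁.mono.le_iff_le hym' hym).1 (by linarith)
  have e2 : y ≤ y' := (hL.mono.le_iff_le hym hym').1 (by linarith)
  have e3 : y = y' := le_antisymm e2 e1
  subst e3
  refine ⟨s'', hsm, y, hym, ?_, by linarith, by linarith⟩
  exact (h₁.mono.lt_iff_lt hsm hym).1 (by linarith)


lemma contDiffOn_succ_of_hasDerivAt {O : Set ℝ} (hO : IsOpen O) {f g : ℝ → ℝ} (n : ℕ)
    (hf : ∀ r ∈ O, HasDerivAt f (g r) r) (hg : ContDiffOn ℝ n g O) :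
    ContDiffOn ℝ (n + 1) f O := by
  rw [contDiffOn_succ_iff_deriv_of_isOpen hO]
  refine ⟨fun r hr => (hf r hr).differentiableAt.differentiableWithinAt, by simp, ?_⟩
  exact hg.congr fun r hr => (hf r hr).deriv

namespace PhaseSys

variable {k lo hi : ℝ} {α : ℝ → ℝ} {D V : ℝ → ℝ → ℝ}

lemma scale_mem {e r : ℝ} (he : 0 < e) (hr : r ∈ Ioo (lo / e) (hi / e)) :
    e * r ∈ Ioo lo hi := by
  have h1 := hr.1
  have h2 := hr.2
  rw [div_lt_iff₀ he] at h1
  rw [lt_div_iff₀ he] at h2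
  exact ⟨by linarith, by linarith⟩

lemma scale_pos {e r : ℝ} (hlo : 0 < lo) (he : 0 < e) (hr : r ∈ Ioo (lo / e) (hi / e)) : 0 < r :=
  (div_pos hlo he).trans hr.1

lemma dD_scale (h : PhaseSys k lo hi α D V) (hlo : 0 < lo) {s e : ℝ} (hs : s ∈ Ioo lo hi)
    (he : 0 < e) : ∀ r ∈ Ioo (lo / e) (hi / e),
    HasDerivAt (fun r => D s (e * r)) (V s (e * r) / r) r := by
  intro r hr
  have hr0 := scale_pos hlo he hr
  have := (h.dD s hs (e * r) (scale_mem he hr)).comp r ((hasDerivAt_id r).const_mul e)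
  refine this.congr_deriv ?_
  field_simp

lemma dV_scale (h : PhaseSys k lo hi α D V) (hlo : 0 < lo) {s e : ℝ} (hs : s ∈ Ioo lo hi)
    (he : 0 < e) : ∀ r ∈ Ioo (lo / e) (hi / e),
    HasDerivAt (fun r => V s (e * r)) ((k ^ 2 - e ^ 2 * r ^ 2) / r * D s (e * r)) r := by
  intro r hr
  have hr0 := scale_pos hlo he hr
  have := (h.dV s hs (e * r) (scale_mem he hr)).comp r ((hasDerivAt_id r).const_mul e)
  refine this.congr_deriv ?_
  field_simp

lemma contDiff_V (h : PhaseSys k lo hi α D V) (hlo : 0 < lo) {s e : ℝ} (hs : s ∈ Ioo lo hi)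
    (he : 0 < e) : ContDiffOn ℝ 1 (fun r => V s (e * r)) (Ioo (lo / e) (hi / e)) := by
  have := contDiffOn_succ_of_hasDerivAt isOpen_Ioo 0 (h.dV_scale hlo hs he) (by
    rw [Nat.cast_zero, contDiffOn_zero]
    apply ContinuousOn.mul
    · exact ContinuousOn.div (by fun_prop) continuousOn_id
        (fun r hr => (scale_pos hlo he hr).ne')
    · exact fun r hr => (h.dD_scale hlo hs he r hr).continuousAt.continuousWithinAt)
  simpa using this

lemma contDiff_D (h : PhaseSys k lo hi α D V) (hlo : 0 < lo) {s e : ℝ} (hs : s ∈ Ioo lo hi)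
    (he : 0 < e) : ContDiffOn ℝ 2 (fun r => D s (e * r)) (Ioo (lo / e) (hi / e)) := by
  have := contDiffOn_succ_of_hasDerivAt isOpen_Ioo 1 (h.dD_scale hlo hs he) (by
    rw [Nat.cast_one]
    exact (h.contDiff_V hlo hs he).div contDiffOn_id (fun r hr => (scale_pos hlo he hr).ne'))
  norm_num at this
  exact this

lemma ode_D (h : PhaseSys k lo hi α D V) (hlo : 0 < lo) {s e : ℝ} (hs : s ∈ Ioo lo hi)
    (he : 0 < e) : ∀ r ∈ Ioo (lo / e) (hi / e),
    deriv (deriv fun r => D s (e * r)) r + deriv (fun r => D s (e * r)) r / r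
      - k ^ 2 * D s (e * r) / r ^ 2 + e ^ 2 * D s (e * r) = 0 := by
  intro r hr
  have hr0 := scale_pos hlo he hr
  have h1 : deriv (fun r => D s (e * r)) =ᶠ[nhds r] fun r => V s (e * r) / r := by
    filter_upwards [isOpen_Ioo.mem_nhds hr] with x hx
    exact (h.dD_scale hlo hs he x hx).deriv
  rw [h1.deriv_eq, h1.eq_of_nhds,
    ((h.dV_scale hlo hs he r hr).fun_div (hasDerivAt_id' r) hr0.ne').deriv]
  try simp only [id]
  field_simp
  ring

/-- Any solution vanishing at the inner radius is a multiple of `D s`. -/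
lemma unique (h : PhaseSys k lo hi α D V) (hlo : 0 < lo) {s e : ℝ} (hs : s ∈ Ioo lo hi)
    (hem : e ∈ Ioo lo hi) (hse : s < e) (hα : α e ≤ α s + Real.pi) {w : ℝ → ℝ}
    (hw : ContDiffOn ℝ 2 w (Icc (s / e) 1))
    (hode : ∀ r ∈ Ioo (s / e) 1, deriv (deriv w) r + deriv w r / r
      - k ^ 2 * w r / r ^ 2 + e ^ 2 * w r = 0) (hwa : w (s / e) = 0) :
    ∃ c : ℝ, ∀ r ∈ Icc (s / e) 1, w r = c * D s (e * r) := by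
  have he : 0 < e := hlo.trans hem.1
  have hs0 : 0 < s := hlo.trans hs.1
  have ha1 : s / e < 1 := (div_lt_one he).2 hse
  have ha0 : 0 < s / e := div_pos hs0 he
  have hO : Icc (s / e) 1 ⊆ Ioo (lo / e) (hi / e) := fun r hr =>
    ⟨(div_lt_div_of_pos_right hs.1 he).trans_le hr.1, hr.2.trans_lt ((one_lt_div he).2 hem.2)⟩
  have hIoo : Ioo (s / e) 1 ⊆ Icc (s / e) 1 := Ioo_subset_Icc_self
  have hDpos : ∀ r ∈ Ioo (s / e) 1, 0 < D s (e * r) := by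
    intro r hr
    have hm := scale_mem he (hO (hIoo hr))
    have h1 : s < e * r := by
      have := hr.1
      rw [div_lt_iff₀ he] at this
      linarith
    have h2 : e * r < e := by
      have := hr.2
      nlinarith
    exact h.D_pos hs hm h1 ((h.mono hm hem h2).trans_le hα)
  let dw : ℝ → ℝ := derivWithin w (Icc (s / e) 1)
  have hdwc : ContinuousOn dw (Icc (s / e) 1) :=
    hw.continuousOn_derivWithin (uniqueDiffOn_Icc ha1) (by norm_num)
  have hwI : ContDiffOn ℝ 2 w (Ioo (s / e) 1) := hw.mono hIoo
  have hd1 : ∀ r ∈ Ioo (s / e) 1, HasDerivAt w (deriv w r) r := fun r hr =>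
    ((hwI.differentiableOn (by norm_num)).differentiableAt (isOpen_Ioo.mem_nhds hr)).hasDerivAt
  have hd2 : ∀ r ∈ Ioo (s / e) 1, HasDerivAt (deriv w) (deriv (deriv w) r) r := by
    have h2 : ContDiffOn ℝ (1 + 1) w (Ioo (s / e) 1) := by
      norm_num
      exact hwI
    rw [contDiffOn_succ_iff_deriv_of_isOpen isOpen_Ioo] at h2
    exact fun r hr => ((h2.2.2.differentiableOn (by norm_num)).differentiableAt
      (isOpen_Ioo.mem_nhds hr)).hasDerivAt
  have hdw : ∀ r ∈ Ioo (s / e) 1, dw r = deriv w r := fun r hr =>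
    derivWithin_of_mem_nhds (Icc_mem_nhds hr.1 hr.2)
  have hwc : ContinuousOn w (Icc (s / e) 1) := hw.continuousOn
  have hDc : ContinuousOn (fun r => D s (e * r)) (Icc (s / e) 1) := fun r hr =>
    (h.dD_scale hlo hs he r (hO hr)).continuousAt.continuousWithinAt
  have hVc : ContinuousOn (fun r => V s (e * r)) (Icc (s / e) 1) := fun r hr =>
    (h.dV_scale hlo hs he r (hO hr)).continuousAt.continuousWithinAt
  let W : ℝ → ℝ := fun r => D s (e * r) * (r * dw r) - w r * V s (e * r)
  have hWc : ContinuousOn W (Icc (s / e) 1) :=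
    (hDc.mul (continuousOn_id.mul hdwc)).sub (hwc.mul hVc)
  have hWd : ∀ r ∈ Ioo (s / e) 1, HasDerivAt W 0 r := by
    intro r hr
    have hr0 : 0 < r := ha0.trans hr.1
    have hrO := hO (hIoo hr)
    have h1 : HasDerivAt (fun r => D s (e * r) * (r * deriv w r) - w r * V s (e * r)) 0 r := by
      refine (((h.dD_scale hlo hs he r hrO).fun_mul
        ((hasDerivAt_id r).fun_mul (hd2 r hr))).fun_sub
        ((hd1 r hr).fun_mul (h.dV_scale hlo hs he r hrO))).congr_deriv ?_
      have h3 : deriv (deriv w) r = -(deriv w r / r) + k ^ 2 * w r / r ^ 2 - e ^ 2 * w r := by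
        linarith [hode r hr]
      rw [h3]
      simp only [id]
      field_simp
      ring
    refine h1.congr_of_eventuallyEq ?_
    filter_upwards [isOpen_Ioo.mem_nhds hr] with x hx
    simp only [W, hdw x hx]
  have hWa : W (s / e) = 0 := by
    have : e * (s / e) = s := by field_simp
    simp only [W, hwa, this, h.D_self hs]
    ring
  have hW0 : ∀ r ∈ Ioo (s / e) 1, W r = 0 := by
    intro r hr
    obtain ⟨c, hc, hslope⟩ := exists_hasDerivAt_eq_slope W (fun _ => 0) hr.1
      (hWc.mono (Icc_subset_Icc_right hr.2.le))
      (fun x hx => hWd x ⟨hx.1, hx.2.trans hr.2⟩)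
    have : r - s / e ≠ 0 := by linarith [hr.1]
    rw [eq_comm, div_eq_zero_iff, or_iff_left this, hWa] at hslope
    linarith
  have hq : ∀ r ∈ Ioo (s / e) 1, HasDerivAt (fun r => w r / D s (e * r)) 0 r := by
    intro r hr
    have hr0 : 0 < r := ha0.trans hr.1
    have hD0 := (hDpos r hr).ne'
    refine ((hd1 r hr).fun_div (h.dD_scale hlo hs he r (hO (hIoo hr))) hD0).congr_deriv ?_
    have := hW0 r hr
    simp only [W, hdw r hr] at this
    rw [div_eq_zero_iff]
    left
    field_simp
    linarith
  obtain ⟨c, hc⟩ := isOpen_Ioo.exists_is_const_of_deriv_eq_zero isPreconnected_Ioo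
    (fun r hr => (hq r hr).differentiableAt.differentiableWithinAt)
    (fun r hr => (hq r hr).deriv)
  refine ⟨c, ?_⟩
  have heq : EqOn w (fun r => c * D s (e * r)) (Ioo (s / e) 1) := by
    intro r hr
    have h1 := hc r hr
    simp only at h1 ⊢
    rw [← h1]
    field_simp [(hDpos r hr).ne']
  exact heq.of_subset_closure hwc (continuousOn_const.mul hDc) hIoo
    (by rw [closure_Ioo ha1.ne])

/-- The radial Neumann function built from the mode one Dirichlet solution has two zeros. -/
lemma two_zeros (h : PhaseSys 1 lo hi α D V) (hlo : 0 < lo) {s e : ℝ} (hs : s ∈ Ioo lo hi)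
    (hem : e ∈ Ioo lo hi) (hse : s < e) (hα : α e = α s + 2 * Real.pi) :
    ∃ c x₁ x₂ : ℝ, s < c ∧ c < e ∧ 0 < V s s + D s s ∧ V s c + D s c < 0 ∧ s < x₁ ∧ x₁ < x₂ ∧
      x₂ < e ∧ ∀ x ∈ Ioo s e, (V s x + D s x) / x = 0 ↔ x = x₁ ∨ x = x₂ := by
  have hpi := Real.pi_pos
  have hmem : ∀ r ∈ Icc s e, r ∈ Ioo lo hi := fun r hr =>
    ⟨hs.1.trans_le hr.1, hr.2.trans_lt hem.2⟩
  obtain ⟨c, hc, hαc⟩ : α s + Real.pi ∈ α '' Icc s e :=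
    intermediate_value_Icc hse.le (h.cont.mono hmem) ⟨by linarith, by linarith⟩
  have hcm := hmem c hc
  have hsc : s < c := (h.mono.lt_iff_lt hs hcm).1 (by linarith)
  have hce : c < e := (h.mono.lt_iff_lt hcm hem).1 (by linarith)
  have hs0 : 0 < V s s + D s s := by
    rw [h.D_self hs]
    linarith [h.V_self hs]
  have hc0 : V s c + D s c < 0 := by
    have e1 : α c - α s = Real.pi := by linarith
    obtain ⟨g, hg0, hg⟩ := h.sinD s hs c hcm
    obtain ⟨g', hg0', hg'⟩ := h.cosV s hs c hcm (by rw [e1]; simp)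
    rw [hg, hg', e1]
    simp [hg0']
  have he0 : 0 < V s e + D s e := by
    have e1 : α e - α s = 2 * Real.pi := by linarith
    obtain ⟨g, hg0, hg⟩ := h.sinD s hs e hem
    obtain ⟨g', hg0', hg'⟩ := h.cosV s hs e hem (by rw [e1]; simp)
    rw [hg, hg', e1]
    simp [hg0']
  let Ψ : ℝ → ℝ := fun x => (V s x + D s x) / x
  have hΨ : ∀ r ∈ Icc s e, HasDerivAt Ψ (-D s r) r := by
    intro r hr
    have hrm := hmem r hr
    have hr0 : 0 < r := hlo.trans hrm.1
    refine (((h.dV s hs r hrm).fun_add (h.dD s hs r hrm)).fun_div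
      (hasDerivAt_id r) hr0.ne').congr_deriv ?_
    simp only [id]
    field_simp
    ring
  have hΨc : ContinuousOn Ψ (Icc s e) := fun r hr => (hΨ r hr).continuousAt.continuousWithinAt
  have hanti : StrictAntiOn Ψ (Icc s c) := by
    apply strictAntiOn_of_deriv_neg (convex_Icc _ _) (hΨc.mono (Icc_subset_Icc_right hc.2))
    rw [interior_Icc]
    intro r hr
    have hr' : r ∈ Icc s e := ⟨hr.1.le, hr.2.le.trans hc.2⟩
    rw [(hΨ r hr').deriv]
    have := h.mono (hmem r hr') hcm hr.2
    linarith [h.D_pos hs (hmem r hr') hr.1 (by linarith)]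
  have hmono : StrictMonoOn Ψ (Icc c e) := by
    apply strictMonoOn_of_deriv_pos (convex_Icc _ _) (hΨc.mono (Icc_subset_Icc_left hc.1))
    rw [interior_Icc]
    intro r hr
    have hr' : r ∈ Icc s e := ⟨hc.1.trans hr.1.le, hr.2.le⟩
    rw [(hΨ r hr').deriv]
    have h1 := h.mono hcm (hmem r hr') hr.1
    have h2 := h.mono (hmem r hr') hem hr.2
    obtain ⟨g, hg0, hg⟩ := h.sinD s hs r (hmem r hr')
    rw [hg]
    have h3 : 0 < Real.sin (α r - α s - Real.pi) :=
      Real.sin_pos_of_pos_of_lt_pi (by linarith) (by linarith)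
    rw [Real.sin_sub_pi] at h3
    nlinarith
  have hposr : ∀ r ∈ Icc s e, 0 < r := fun r hr => hlo.trans (hmem r hr).1
  have Ψs : 0 < Ψ s := div_pos hs0 (hposr s ⟨le_refl _, hse.le⟩)
  have Ψc : Ψ c < 0 := div_neg_of_neg_of_pos hc0 (hposr c hc)
  have Ψe : 0 < Ψ e := div_pos he0 (hposr e ⟨hse.le, le_refl _⟩)
  obtain ⟨x₁, hx₁, hΨ₁⟩ : (0 : ℝ) ∈ Ψ '' Icc s c :=
    intermediate_value_Icc' hsc.le (hΨc.mono (Icc_subset_Icc_right hc.2)) ⟨Ψc.le, Ψs.le⟩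
  obtain ⟨x₂, hx₂, hΨ₂⟩ : (0 : ℝ) ∈ Ψ '' Icc c e :=
    intermediate_value_Icc hce.le (hΨc.mono (Icc_subset_Icc_left hc.1)) ⟨Ψc.le, Ψe.le⟩
  have n1 : s ≠ x₁ := by rintro rfl; linarith
  have n2 : x₁ ≠ c := by rintro rfl; linarith
  have n3 : x₂ ≠ e := by rintro rfl; linarith
  refine ⟨c, x₁, x₂, hsc, hce, hs0, hc0, lt_of_le_of_ne hx₁.1 n1,
    (lt_of_le_of_ne hx₁.2 n2).trans_le hx₂.1, lt_of_le_of_ne hx₂.2 n3, ?_⟩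
  intro x hx
  constructor
  · intro hx0
    rcases le_total x c with hxc | hxc
    · left
      exact hanti.injOn ⟨hx.1.le, hxc⟩ hx₁ (show Ψ x = Ψ x₁ by rw [hΨ₁]; exact hx0)
    · right
      exact hmono.injOn ⟨hxc, hx.2.le⟩ hx₂ (show Ψ x = Ψ x₂ by rw [hΨ₂]; exact hx0)
  · rintro (rfl | rfl)
    · exact hΨ₁
    · exact hΨ₂

end PhaseSys

/-- For every integer `l ≥ 4` there is an annulus `{a < |x| < 1}` on
which the second nontrivial radial Neumann eigenvalue coincides with the first `l`-mode
Dirichlet eigenvalue, and a non-resonance condition holds: no other `ml`-mode Dirichlet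
eigenvalue equals this common value. -/
theorem eigenvalue_crossing_and_nonresonance (l : ℕ) (hl : 4 ≤ l) :
    ∃ a ∈ Set.Ioo (0:ℝ) 1, ∃ μ > (0:ℝ),
      (∃ ψ : ℝ → ℝ, ContDiffOn ℝ 2 ψ (Set.Icc a 1) ∧
        (∀ r ∈ Set.Ioo a 1, deriv (deriv ψ) r + deriv ψ r / r + μ * ψ r = 0) ∧
        derivWithin ψ (Set.Icc a 1) a = 0 ∧ derivWithin ψ (Set.Icc a 1) 1 = 0 ∧
        (∃ r ∈ Set.Icc a 1, ψ r ≠ ψ a) ∧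
        {r ∈ Set.Ioo a 1 | ψ r = 0}.encard = 2) ∧
      (∃ φ : ℝ → ℝ, ContDiffOn ℝ 2 φ (Set.Icc a 1) ∧
        (∀ r ∈ Set.Ioo a 1, deriv (deriv φ) r + deriv φ r / r
          - (l:ℝ)^2 * φ r / r^2 + μ * φ r = 0) ∧
        φ a = 0 ∧ φ 1 = 0 ∧ (∀ r ∈ Set.Ioo a 1, 0 < φ r) ∧
        (∀ m : ℕ, 1 ≤ m → ∀ w : ℝ → ℝ, ContDiffOn ℝ 2 w (Set.Icc a 1) →
          (∀ r ∈ Set.Ioo a 1, deriv (deriv w) r + deriv w r / r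
            - ((m * l : ℕ) : ℝ)^2 * w r / r^2 + μ * w r = 0) →
          w a = 0 → w 1 = 0 → (∃ r ∈ Set.Icc a 1, w r ≠ 0) →
          m = 1 ∧ ∃ c : ℝ, ∀ r ∈ Set.Icc a 1, w r = c * φ r)) := by
  have hl' : (4 : ℝ) ≤ l := by exact_mod_cast hl
  have hlo : (0 : ℝ) < 1 / 20 := by norm_num
  have hhi : (1 / 20 : ℝ) < 2 * l + 13 := by linarith
  obtain ⟨α₁, D₁, V₁, h₁⟩ := phaseSys_exists 1 (1 / 20) (2 * l + 13) hlo hhi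
  obtain ⟨αl, Dl, Vl, hL⟩ := phaseSys_exists l (1 / 20) (2 * l + 13) hlo hhi
  obtain ⟨s, hs, e, hem, hse, hα₁, hαl⟩ := phase_crossing l hl' h₁ hL
  have he : 0 < e := hlo.trans hem.1
  have hs0 : 0 < s := hlo.trans hs.1
  have ha1 : s / e < 1 := (div_lt_one he).2 hse
  have ha0 : 0 < s / e := div_pos hs0 he
  have hes : e * (s / e) = s := by field_simp
  have hO : Icc (s / e) 1 ⊆ Ioo ((1 / 20) / e) ((2 * l + 13) / e) := fun r hr =>
    ⟨(div_lt_div_of_pos_right hs.1 he).trans_le hr.1, hr.2.trans_lt ((one_lt_div he).2 hem.2)⟩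
  have hIoo : Ioo (s / e) 1 ⊆ Icc (s / e) 1 := Ioo_subset_Icc_self
  have hmem : ∀ r ∈ Ioo (s / e) 1, e * r ∈ Ioo s e := by
    intro r hr
    have h1 := hr.1
    rw [div_lt_iff₀ he] at h1
    exact ⟨by linarith, by nlinarith [hr.2]⟩
  refine ⟨s / e, ⟨ha0, ha1⟩, e ^ 2, by positivity, ?_, ?_⟩
  · -- Neumann part
    obtain ⟨c, x₁, x₂, hsc, hce, hψs, hψc, hx₁, hx₁₂, hx₂, hzero⟩ := h₁.two_zeros hlo hs hem hse hα₁
    let ψ : ℝ → ℝ := fun r => (V₁ s (e * r) + D₁ s (e * r)) / r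
    have hψd : ∀ r ∈ Ioo ((1 / 20) / e) ((2 * l + 13) / e),
        HasDerivAt ψ (-e ^ 2 * D₁ s (e * r)) r := by
      intro r hr
      have hr0 := PhaseSys.scale_pos hlo he hr
      refine (((h₁.dV_scale hlo hs he r hr).fun_add (h₁.dD_scale hlo hs he r hr)).fun_div
        (hasDerivAt_id r) hr0.ne').congr_deriv ?_
      simp only [id]
      field_simp
      ring
    have hψC : ContDiffOn ℝ 2 ψ (Ioo ((1 / 20) / e) ((2 * l + 13) / e)) := by
      have := contDiffOn_succ_of_hasDerivAt isOpen_Ioo 1 hψd (by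
        rw [Nat.cast_one]
        exact contDiffOn_const.mul ((h₁.contDiff_D hlo hs he).of_le (by norm_num)))
      norm_num at this
      norm_num
      exact this
    have hDe : D₁ s e = 0 := by
      obtain ⟨g, _, hg⟩ := h₁.sinD s hs e hem
      rw [hg, hα₁]
      simp
    refine ⟨ψ, hψC.mono hO, ?_, ?_, ?_, ?_, ?_⟩
    · intro r hr
      have hrO := hO (hIoo hr)
      have hr0 := PhaseSys.scale_pos hlo he hrO
      have h1 : deriv ψ =ᶠ[nhds r] fun r => -e ^ 2 * D₁ s (e * r) := by
        filter_upwards [isOpen_Ioo.mem_nhds hrO] with x hx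
        exact (hψd x hx).deriv
      rw [h1.deriv_eq, h1.eq_of_nhds, ((h₁.dD_scale hlo hs he r hrO).const_mul _).deriv]
      simp only [ψ]
      field_simp
      ring
    · have hm : s / e ∈ Icc (s / e) 1 := ⟨le_refl _, ha1.le⟩
      rw [(hψd _ (hO hm)).hasDerivWithinAt.derivWithin (uniqueDiffOn_Icc ha1 _ hm), hes,
        h₁.D_self hs, mul_zero]
    · have hm : (1 : ℝ) ∈ Icc (s / e) 1 := ⟨ha1.le, le_refl _⟩
      rw [(hψd _ (hO hm)).hasDerivWithinAt.derivWithin (uniqueDiffOn_Icc ha1 _ hm), mul_one,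
        hDe, mul_zero]
    · refine ⟨c / e, ⟨by gcongr, ((div_lt_one he).2 hce).le⟩, ?_⟩
      have hec : e * (c / e) = c := by field_simp
      have h1 : ψ (c / e) < 0 := by
        simp only [ψ, hec]
        exact div_neg_of_neg_of_pos hψc (div_pos (hs0.trans hsc) he)
      have h2 : 0 < ψ (s / e) := by
        simp only [ψ, hes]
        exact div_pos hψs ha0
      linarith
    · have hset : {r ∈ Ioo (s / e) 1 | ψ r = 0} = {x₁ / e, x₂ / e} := by
        ext r
        simp only [mem_setOf_eq, mem_insert_iff, mem_singleton_iff]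
        have hkey : ∀ r ∈ Ioo (s / e) 1, ψ r = 0 ↔ r = x₁ / e ∨ r = x₂ / e := by
          intro r hr
          have hr0 : 0 < r := ha0.trans hr.1
          have h1 := hzero (e * r) (hmem r hr)
          have h2 : ψ r = 0 ↔ (V₁ s (e * r) + D₁ s (e * r)) / (e * r) = 0 := by
            simp only [ψ, div_eq_zero_iff, hr0.ne', (mul_pos he hr0).ne']
          rw [h2, h1, eq_div_iff he.ne', eq_div_iff he.ne', mul_comm e r]
        constructor
        · rintro ⟨hr, h0⟩
          exact (hkey r hr).1 h0
        · intro hr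
          have hrI : r ∈ Ioo (s / e) 1 := by
            rcases hr with rfl | rfl
            · exact ⟨by gcongr, (div_lt_one he).2 (hx₁₂.trans hx₂)⟩
            · exact ⟨div_lt_div_of_pos_right (hx₁.trans hx₁₂) he, (div_lt_one he).2 hx₂⟩
          exact ⟨hrI, (hkey r hrI).2 hr⟩
      rw [hset]
      exact encard_pair (div_lt_div_of_pos_right hx₁₂ he).ne
  · -- Dirichlet part
    refine ⟨fun r => Dl s (e * r), (hL.contDiff_D hlo hs he).mono hO,
      fun r hr => hL.ode_D hlo hs he r (hO (hIoo hr)), ?_, ?_, ?_, ?_⟩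
    · simp only [hes, hL.D_self hs]
    · obtain ⟨g, _, hg⟩ := hL.sinD s hs e hem
      simp only [mul_one]
      rw [hg, hαl]
      simp
    · intro r hr
      have hm := PhaseSys.scale_mem he (hO (hIoo hr))
      have h1 := hmem r hr
      exact hL.D_pos hs hm h1.1 (by rw [← hαl]; exact hL.mono hm hem h1.2)
    · intro m hm w hwC hwode hwa hw1 hwne
      rcases eq_or_lt_of_le hm with hm1 | hm2
      · subst hm1
        refine ⟨rfl, ?_⟩
        simp only [one_mul] at hwode
        exact hL.unique hlo hs hem hse hαl.le hwC hwode hwa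
      · exfalso
        obtain ⟨αm, Dm, Vm, hM⟩ :=
          phaseSys_exists ((m * l : ℕ) : ℝ) (1 / 20) (2 * l + 13) hlo hhi
        have hk : (l : ℝ) ^ 2 < ((m * l : ℕ) : ℝ) ^ 2 := by
          have h3 : l < m * l := by nlinarith
          have h4 : (l : ℝ) < ((m * l : ℕ) : ℝ) := by exact_mod_cast h3
          exact pow_lt_pow_left₀ h4 (by positivity) (by norm_num)
        have hlt := hL.lt_of_mode hM hlo hk hs hem hse hαl
        obtain ⟨c, hc⟩ := hM.unique hlo hs hem hse hlt.le hwC hwode hwa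
        have hpos := hM.D_pos hs hem hse hlt
        have h1 := hc 1 ⟨ha1.le, le_refl _⟩
        rw [hw1, mul_one] at h1
        have hc0 : c = 0 := by
          rcases mul_eq_zero.1 h1.symm with h2 | h2
          · exact h2
          · exact absurd h2 hpos.ne'
        obtain ⟨r, hr, hne⟩ := hwne
        apply hne
        rw [hc r hr, hc0, zero_mul]
end

section
/- There exist a constant C > 0 and an integer L such that the following holds for every integer l ≥ L: if a ∈ (1/2, 1) and μ > 0 are such that the Neumann problem ψ''(r) + ψ'(r)/r + μψ(r) = 0 on (a,1) with ψ'(a) = ψ'(1) = 0 has a nonconstant C² solution with exactly two zeros in (a,1), and the Dirichlet problem φ''(r) + φ'(r)/r − l²φ(r)/r² + μφ(r) = 0 on (a,1) with φ(a) = φ(1) = 0 has a C² solution which is positive on (a,1), then |a − (1 − √3·π/l)| ≤ C/l². -/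
open Set Real

/-- `μ` is the second nontrivial radial Neumann eigenvalue of the annulus
`{a < |x| < 1}`: the radial Neumann problem has a nonconstant `C²` solution with exactly
two zeros in `(a,1)`. -/
def NeumannMu02 (a μ : ℝ) : Prop :=
  ∃ ψ : ℝ → ℝ, ContDiffOn ℝ 2 ψ (Set.Icc a 1) ∧
    (∀ r ∈ Set.Ioo a 1, deriv (deriv ψ) r + deriv ψ r / r + μ * ψ r = 0) ∧
    derivWithin ψ (Set.Icc a 1) a = 0 ∧ derivWithin ψ (Set.Icc a 1) 1 = 0 ∧
    (∃ r ∈ Set.Icc a 1, ψ r ≠ ψ a) ∧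
    {r ∈ Set.Ioo a 1 | ψ r = 0}.encard = 2

/-- `μ` is the first `l`-mode Dirichlet eigenvalue of the annulus `{a < |x| < 1}`:
the `l`-mode Dirichlet problem has a `C²` solution positive on `(a,1)`. -/
def DirichletLam0 (a μ : ℝ) (l : ℕ) : Prop :=
  ∃ φ : ℝ → ℝ, ContDiffOn ℝ 2 φ (Set.Icc a 1) ∧
    (∀ r ∈ Set.Ioo a 1, deriv (deriv φ) r + deriv φ r / r
      - (l:ℝ)^2 * φ r / r^2 + μ * φ r = 0) ∧
    φ a = 0 ∧ φ 1 = 0 ∧ (∀ r ∈ Set.Ioo a 1, 0 < φ r)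

lemma sl_rolle (f g : ℝ → ℝ) (p q m μ : ℝ) (hp : 0 < p) (hpq : p < q)
    (hf : ContinuousOn f (Set.Icc p q)) (hg : ContinuousOn g (Set.Icc p q))
    (hf' : ∀ r ∈ Set.Ioo p q, HasDerivAt f (g r) r)
    (hg' : ∀ r ∈ Set.Ioo p q, HasDerivAt g (-(g r) / r + (m / r^2 - μ) * f r) r)
    (fp : f p = 0) (fq : f q = 0) (hne : ∀ r ∈ Set.Ioo p q, f r ≠ 0) :
    ∃ r ∈ Set.Ioo p q, μ - (m - 1/4) / r^2 = π^2 / (q - p)^2 := by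
  set k : ℝ := π / (q - p) with hk
  have hqp : 0 < q - p := by linarith
  have hkpos : 0 < k := div_pos Real.pi_pos hqp
  have hkq : k * (q - p) = π := by rw [hk]; field_simp
  let W : ℝ → ℝ := fun r => Real.sqrt r * ((g r + f r / (2 * r)) * Real.sin (k * (r - p))
    - f r * (k * Real.cos (k * (r - p))))
  have hW : ContinuousOn W (Set.Icc p q) := by
    have h2 : ContinuousOn (fun r : ℝ => f r / (2 * r)) (Set.Icc p q) :=
      hf.div (by fun_prop) (fun r hr => by have := hr.1; exact ne_of_gt (by linarith))
    have h3 : ContinuousOn (fun r : ℝ => Real.sin (k * (r - p))) (Set.Icc p q) := by fun_prop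
    have h4 : ContinuousOn (fun r : ℝ => k * Real.cos (k * (r - p))) (Set.Icc p q) := by fun_prop
    exact Real.continuous_sqrt.continuousOn.mul (((hg.add h2).mul h3).sub (hf.mul h4))
  have hW' : ∀ r ∈ Set.Ioo p q, HasDerivAt W
      (Real.sqrt r * f r * Real.sin (k * (r - p)) * ((m - 1/4) / r^2 - μ + k^2)) r := by
    intro r hr
    have hr0 : 0 < r := hp.trans hr.1
    have hs0 : 0 < Real.sqrt r := Real.sqrt_pos.2 hr0
    have d1 := hf' r hr
    have d2 := hg' r hr
    have d3 : HasDerivAt (fun r : ℝ => k * (r - p)) k r := by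
      simpa using ((hasDerivAt_id r).sub_const p).const_mul k
    have d4 := d3.sin
    have d5 := d3.cos
    have d6 : HasDerivAt (fun r : ℝ => 2 * r) 2 r := by
      simpa using (hasDerivAt_id r).const_mul (2:ℝ)
    have d7 := d1.fun_div d6 (by positivity)
    have d8 := Real.hasDerivAt_sqrt hr0.ne'
    have d9 := d8.fun_mul (((d2.fun_add d7).fun_mul d4).fun_sub (d1.fun_mul (d5.const_mul k)))
    refine d9.congr_deriv ?_
    have e : 1 / (2 * Real.sqrt r) = Real.sqrt r / (2 * r) := by
      rw [div_eq_div_iff (by positivity) (by positivity)]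
      nlinarith [Real.mul_self_sqrt hr0.le]
    rw [e]
    generalize Real.sqrt r = S
    field_simp
    ring
  have Wp : W p = 0 := by simp [W, fp]
  have Wq : W q = 0 := by simp [W, fq, hkq]
  obtain ⟨r, hr, h0⟩ := exists_hasDerivAt_eq_zero hpq hW (Wp.trans Wq.symm) hW'
  refine ⟨r, hr, ?_⟩
  have hr0 : 0 < r := hp.trans hr.1
  have hs0 : Real.sqrt r ≠ 0 := (Real.sqrt_pos.2 hr0).ne'
  have hsin : Real.sin (k * (r - p)) ≠ 0 := by
    apply ne_of_gt
    apply Real.sin_pos_of_pos_of_lt_pi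
    · exact mul_pos hkpos (by linarith [hr.1])
    · rw [← hkq]; exact mul_lt_mul_of_pos_left (by linarith [hr.2]) hkpos
  have h1 : (m - 1/4) / r^2 - μ + k^2 = 0 := by
    rcases mul_eq_zero.1 h0 with h | h
    · exact absurd h (mul_ne_zero (mul_ne_zero hs0 (hne r hr)) hsin)
    · exact h
  have : k^2 = π^2 / (q-p)^2 := by rw [hk, div_pow]
  linarith

lemma c2_facts (f : ℝ → ℝ) (a : ℝ) (ha : a < 1) (hf : ContDiffOn ℝ 2 f (Set.Icc a 1)) :
    ContinuousOn f (Set.Icc a 1) ∧ ContinuousOn (derivWithin f (Set.Icc a 1)) (Set.Icc a 1) ∧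
    (∀ r ∈ Set.Ioo a 1, HasDerivAt f (derivWithin f (Set.Icc a 1) r) r) ∧
    (∀ r ∈ Set.Ioo a 1, HasDerivAt (derivWithin f (Set.Icc a 1)) (deriv (deriv f) r) r) ∧
    (∀ r ∈ Set.Ioo a 1, deriv f r = derivWithin f (Set.Icc a 1) r) := by
  have hu : UniqueDiffOn ℝ (Set.Icc a 1) := uniqueDiffOn_Icc ha
  have hd : ContDiffOn ℝ 1 (derivWithin f (Set.Icc a 1)) (Set.Icc a 1) :=
    hf.derivWithin hu (by norm_num)
  have heq : ∀ r ∈ Set.Ioo a 1, deriv f r = derivWithin f (Set.Icc a 1) r := fun r hr =>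
    (derivWithin_of_mem_nhds (Icc_mem_nhds hr.1 hr.2)).symm
  refine ⟨hf.continuousOn, hd.continuousOn, ?_, ?_, heq⟩
  · intro r hr
    rw [← heq r hr]
    exact ((hf.differentiableOn (by norm_num) r (Set.Ioo_subset_Icc_self hr)).differentiableAt
      (Icc_mem_nhds hr.1 hr.2)).hasDerivAt
  · intro r hr
    have h1 := ((hd.differentiableOn (by norm_num) r (Set.Ioo_subset_Icc_self hr)).differentiableAt
      (Icc_mem_nhds hr.1 hr.2)).hasDerivAt
    have h2 : deriv f =ᶠ[nhds r] derivWithin f (Set.Icc a 1) := by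
      filter_upwards [Ioo_mem_nhds hr.1 hr.2] with x hx using heq x hx
    rw [h2.deriv_eq]
    exact h1

lemma dirichlet_bound (a μ : ℝ) (l : ℕ) (ha : 1/2 < a) (ha1 : a < 1)
    (h : DirichletLam0 a μ l) :
    ∃ r ∈ Set.Ioo a 1, μ - ((l:ℝ)^2 - 1/4) / r^2 = π^2 / (1 - a)^2 := by
  obtain ⟨φ, hφ, hode, h0, h1, hpos⟩ := h
  obtain ⟨c0, c1, d0, d1, e⟩ := c2_facts φ a ha1 hφ
  refine sl_rolle φ _ a 1 _ μ (by linarith) ha1 c0 c1 d0 ?_ h0 h1 (fun r hr => (hpos r hr).ne')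
  intro r hr
  refine (d1 r hr).congr_deriv ?_
  have := hode r hr
  rw [e r hr] at this
  rw [neg_div, sub_mul, div_mul_eq_mul_div]
  linarith

lemma neumann_bound (a μ : ℝ) (ha : 1/2 < a) (ha1 : a < 1) (hμ : 0 < μ)
    (h : NeumannMu02 a μ) :
    ∃ c ∈ Set.Ioo a 1, ∃ r ∈ Set.Ioo a 1, ∃ s ∈ Set.Ioo a 1,
      μ - (1 - 1/4) / r^2 = π^2 / (c - a)^2 ∧ μ - (1 - 1/4) / s^2 = π^2 / (1 - c)^2 := by
  obtain ⟨ψ, hψ, hode, h0, h1, -, hz⟩ := h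
  obtain ⟨c0, c1, d0, d1, e⟩ := c2_facts ψ a ha1 hψ
  set χ := derivWithin ψ (Set.Icc a 1) with hχ
  have ode : ∀ r ∈ Set.Ioo a 1, deriv (deriv ψ) r = -(χ r) / r - μ * ψ r := by
    intro r hr
    have := hode r hr
    rw [e r hr] at this
    rw [neg_div]
    linarith
  -- between critical points there is a zero
  have key : ∀ p q, a ≤ p → p < q → q ≤ 1 → χ p = 0 → χ q = 0 → ∃ z ∈ Set.Ioo p q, ψ z = 0 := by
    intro p q hap hpq hq1 hp hq
    have hc : ContinuousOn (fun r => r * χ r) (Set.Icc p q) :=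
      continuousOn_id.mul (c1.mono (Set.Icc_subset_Icc hap hq1))
    have hd : ∀ r ∈ Set.Ioo p q, HasDerivAt (fun r => r * χ r) (-(μ * r * ψ r)) r := by
      intro r hr
      have hr' : r ∈ Set.Ioo a 1 := ⟨hap.trans_lt hr.1, hr.2.trans_le hq1⟩
      have hr0 : 0 < r := by linarith [hr'.1]
      refine ((hasDerivAt_id r).fun_mul (d1 r hr')).congr_deriv ?_
      rw [ode r hr']
      simp only [id]
      field_simp
      ring
    obtain ⟨z, hz, hz0⟩ := exists_hasDerivAt_eq_zero hpq hc (by simp [hp, hq]) hd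
    refine ⟨z, hz, ?_⟩
    have hz0' : 0 < z := by linarith [hz.1]
    have : μ * z * ψ z = 0 := by linarith
    exact (mul_eq_zero.1 this).resolve_left (by positivity)
  obtain ⟨x, y, hxy, hset⟩ := Set.encard_eq_two.1 hz
  have hmem : ∀ z ∈ Set.Ioo a 1, ψ z = 0 → z = x ∨ z = y := by
    intro z hz1 hz2
    have : z ∈ {r ∈ Set.Ioo a 1 | ψ r = 0} := ⟨hz1, hz2⟩
    rw [hset] at this
    simpa using this
  have hx : x ∈ {r ∈ Set.Ioo a 1 | ψ r = 0} := by rw [hset]; simp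
  have hy : y ∈ {r ∈ Set.Ioo a 1 | ψ r = 0} := by rw [hset]; simp
  have no3 : ∀ p q, a < p → p < q → q < 1 → χ p = 0 → χ q = 0 → False := by
    intro p q hap hpq hq1 hp hq
    obtain ⟨z1, ⟨h11, h12⟩, k1⟩ := key a p le_rfl hap (by linarith) h0 hp
    obtain ⟨z2, ⟨h21, h22⟩, k2⟩ := key p q hap.le hpq hq1.le hp hq
    obtain ⟨z3, ⟨h31, h32⟩, k3⟩ := key q 1 (by linarith) hq1 le_rfl hq h1
    have m1 := hmem z1 ⟨by linarith, by linarith⟩ k1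
    have m2 := hmem z2 ⟨by linarith, by linarith⟩ k2
    have m3 := hmem z3 ⟨by linarith, by linarith⟩ k3
    rcases m1 with m1 | m1 <;> rcases m2 with m2 | m2 <;> rcases m3 with m3 | m3 <;> linarith
  have rol : ∀ x y, x ∈ Set.Ioo a 1 → y ∈ Set.Ioo a 1 → ψ x = 0 → ψ y = 0 → x < y →
      ∃ c ∈ Set.Ioo a 1, χ c = 0 := by
    intro x y hx hy hx0 hy0 hlt
    obtain ⟨c, hc, hc0⟩ := exists_hasDerivAt_eq_zero (f := ψ) (f' := χ) hlt
      (c0.mono (Set.Icc_subset_Icc hx.1.le hy.2.le)) (hx0.trans hy0.symm)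
      (fun r hr => d0 r ⟨hx.1.trans hr.1, hr.2.trans hy.2⟩)
    exact ⟨c, ⟨hx.1.trans hc.1, hc.2.trans hy.2⟩, hc0⟩
  obtain ⟨c, hc, hc0⟩ : ∃ c ∈ Set.Ioo a 1, χ c = 0 := by
    rcases lt_or_gt_of_ne hxy with hlt | hlt
    · exact rol x y hx.1 hy.1 hx.2 hy.2 hlt
    · exact rol y x hy.1 hx.1 hy.2 hx.2 hlt
  have app : ∀ p q, a ≤ p → p < q → q ≤ 1 → χ p = 0 → χ q = 0 →
      (∀ r ∈ Set.Ioo p q, χ r ≠ 0) →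
      ∃ r ∈ Set.Ioo p q, μ - (1 - 1/4) / r^2 = π^2 / (q - p)^2 := by
    intro p q hap hpq hq1 hp hq hne
    have hsub := Set.Icc_subset_Icc hap hq1
    have hc1 := c1.mono hsub
    refine sl_rolle χ (fun r => -(χ r) / r - μ * ψ r) p q 1 μ (by linarith) hpq hc1 ?_ ?_ ?_
      hp hq hne
    · refine (hc1.neg.div continuousOn_id ?_).sub (continuousOn_const.mul (c0.mono hsub))
      intro r hr
      have := hr.1
      simp only [id]
      exact ne_of_gt (by linarith)
    · intro r hr
      have hr' : r ∈ Set.Ioo a 1 := ⟨hap.trans_lt hr.1, hr.2.trans_le hq1⟩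
      rw [← ode r hr']
      exact d1 r hr'
    · intro r hr
      have hr' : r ∈ Set.Ioo a 1 := ⟨hap.trans_lt hr.1, hr.2.trans_le hq1⟩
      have hr0 : 0 < r := by linarith [hr'.1]
      refine (((d1 r hr').fun_neg.fun_div (hasDerivAt_id r) hr0.ne').fun_sub
        ((d0 r hr').const_mul μ)).congr_deriv ?_
      rw [ode r hr']
      simp only [id]
      field_simp
      ring
  obtain ⟨r, hr, er⟩ := app a c le_rfl hc.1 hc.2.le h0 hc0
    (fun r hr hr0 => no3 r c hr.1 hr.2 hc.2 hr0 hc0)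
  obtain ⟨s, hs, es⟩ := app c 1 hc.1.le hc.2 le_rfl hc0 h1
    (fun r hr hr0 => no3 c r hc.1 hr.1 hr.2 hc0 hr0)
  exact ⟨c, hc, r, ⟨hr.1, hr.2.trans hc.2⟩, s, ⟨hc.1.trans hs.1, hs.2⟩, er, es⟩

lemma le_of_sq_le_sq' {x y : ℝ} (h : x^2 ≤ y^2) (hy : 0 ≤ y) : x ≤ y :=
  (abs_le.1 (abs_le_of_sq_le_sq h hy)).2

lemma piece_bound (μ r x : ℝ) (hr : 1/2 < r) (hx : 0 < x)
    (h : μ - (1 - 1/4) / r^2 = π^2 / x^2) : (μ - 3) * x^2 ≤ π^2 ∧ π^2 ≤ μ * x^2 := by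
  have h1 : 0 < (1 - 1/4 : ℝ) / r^2 := by have : 0 < r := by linarith
                                          positivity
  have h2 : (1 - 1/4 : ℝ) / r^2 ≤ 3 := by
    have : 0 < r := by linarith
    rw [div_le_iff₀ (by positivity)]; nlinarith
  have h3 : π^2 = (μ - (1 - 1/4) / r^2) * x^2 := by rw [h]; field_simp
  rw [h3]
  constructor <;> apply mul_le_mul_of_nonneg_right _ (sq_nonneg x) <;> linarith

set_option maxHeartbeats 400000 in
lemma final_arith (l a h : ℝ) (hlR : 1 ≤ l) (hh : h = 1 - a) (hh0 : 0 < h) (hh1 : h < 1/2)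
    (v1 : (l * h)^2 ≤ 3 * π^2 + 4 * h^2) (v2 : 3 * π^2 * a^2 ≤ (l * h)^2) :
    |a - (1 - Real.sqrt 3 * π / l)| ≤ 42 / l^2 := by
  have hpi := Real.pi_pos
  have hpi3 := Real.pi_gt_three
  have hpi4 := Real.pi_lt_d2
  have s3 : √3 ^ 2 = 3 := Real.sq_sqrt (by norm_num)
  have s30 : 0 ≤ √3 := Real.sqrt_nonneg 3
  have s31 : 1 ≤ √3 := by nlinarith only [s3, s30]
  have s32 : √3 ≤ 1.75 := by nlinarith only [s3, s30]
  obtain ⟨K, hK⟩ : ∃ K, K = √3 * π := ⟨_, rfl⟩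
  have hK2 : K^2 = 3 * π^2 := by rw [hK, mul_pow, s3]
  have hK3 : 3 ≤ K := by rw [hK]; nlinarith only [s31, hpi3, hpi]
  have hK6 : K ≤ 6 := by
    have := mul_le_mul s32 hpi4.le hpi.le (by norm_num : (0:ℝ) ≤ 1.75)
    rw [hK]; linarith
  have hlh : 0 < l * h := by positivity
  have w1 : K * a ≤ l * h := by
    refine le_of_sq_le_sq' ?_ hlh.le
    rw [mul_pow, hK2]; exact v2
  have w2 : l * h - K ≤ 6 * h := by
    rw [← hK2] at v1
    have : l * h ≤ K + 2 * h := by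
      refine le_of_sq_le_sq' ?_ (by positivity)
      nlinarith [mul_pos hh0 (by linarith : 0 < K)]
    linarith
  have w3 : -(6 * h) ≤ l * h - K := by
    have : K * a = K - K * h := by rw [hh]; ring
    nlinarith only [this, w1, hK6, hh0]
  have w4 : l * h ≤ 7 := by
    rw [← hK2] at v1
    refine le_of_sq_le_sq' ?_ (by norm_num)
    nlinarith only [v1, hK6, hK3, hh0, hh1]
  have hl0 : (0:ℝ) < l := by linarith
  rw [← hK]
  have e1 : a - (1 - K / l) = -((l * h - K) * l) / l^2 := by
    rw [hh]; field_simp; ring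
  rw [e1, abs_div, abs_of_pos (by positivity : (0:ℝ) < l^2)]
  apply div_le_div_of_nonneg_right _ (by positivity)
  rw [abs_neg, abs_le]
  constructor <;> nlinarith only [w2, w3, w4, hl0, mul_le_mul_of_nonneg_right w2 hl0.le, mul_le_mul_of_nonneg_right w3 hl0.le]

/-- First-order asymptotics of the crossing points:
`a_l = 1 − √3·π/l + O(l⁻²)`. -/
theorem crossing_point_first_order_asymptotics :
    ∃ C > (0:ℝ), ∃ L : ℕ, ∀ l : ℕ, L ≤ l →
      ∀ a ∈ Set.Ioo (1/2 : ℝ) 1, ∀ μ > (0:ℝ),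
        NeumannMu02 a μ → DirichletLam0 a μ l →
        |a - (1 - Real.sqrt 3 * π / l)| ≤ C / (l:ℝ)^2 := by
  refine ⟨42, by norm_num, 1, ?_⟩
  intro l hl a ha μ hμ hN hD
  obtain ⟨ha, ha1⟩ := ha
  obtain ⟨c, hc, r, hr, s, hs, er, es⟩ := neumann_bound a μ ha ha1 hμ hN
  obtain ⟨t, ht, et⟩ := dirichlet_bound a μ l ha ha1 hD
  have hlR : (1:ℝ) ≤ l := by exact_mod_cast hl
  obtain ⟨p1, p2⟩ := piece_bound μ r (c - a) (by linarith [hr.1]) (by linarith [hc.1]) er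
  obtain ⟨p3, p4⟩ := piece_bound μ s (1 - c) (by linarith [hs.1]) (by linarith [hc.2]) es
  have hx : 0 < c - a := by linarith [hc.1]
  have hy : 0 < 1 - c := by linarith [hc.2]
  obtain ⟨h, hh⟩ : ∃ h, h = 1 - a := ⟨_, rfl⟩
  have hpi := Real.pi_pos
  have hpi3 := Real.pi_gt_three
  have hpi4 := Real.pi_lt_d2
  have hh0 : 0 < h := by linarith
  have hh1 : h < 1/2 := by linarith
  have hsum : h = (c - a) + (1 - c) := by rw [hh]; ring
  have n1 : 4 * π^2 ≤ μ * h^2 := by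
    have q1 : π ≤ √μ * (c - a) := by
      refine le_of_sq_le_sq' ?_ (by positivity)
      rw [mul_pow, Real.sq_sqrt hμ.le]; exact p2
    have q2 : π ≤ √μ * (1 - c) := by
      refine le_of_sq_le_sq' ?_ (by positivity)
      rw [mul_pow, Real.sq_sqrt hμ.le]; exact p4
    have q3 : 2 * π ≤ √μ * h := by rw [hsum]; linarith
    have q4 := pow_le_pow_left₀ (by positivity) q3 2
    rw [mul_pow, mul_pow, Real.sq_sqrt hμ.le] at q4
    linarith
  have n2 : (μ - 3) * h^2 ≤ 4 * π^2 := by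
    rcases le_total μ 3 with hm | hm
    · nlinarith [sq_nonneg h, sq_nonneg π, mul_nonneg (sub_nonneg.2 hm) (sq_nonneg h)]
    have hm' : 0 ≤ μ - 3 := by linarith
    have q1 : √(μ-3) * (c - a) ≤ π := by
      refine le_of_sq_le_sq' ?_ (by positivity)
      rw [mul_pow, Real.sq_sqrt hm']; exact p1
    have q2 : √(μ-3) * (1 - c) ≤ π := by
      refine le_of_sq_le_sq' ?_ (by positivity)
      rw [mul_pow, Real.sq_sqrt hm']; exact p3
    have q3 : √(μ-3) * h ≤ 2 * π := by rw [hsum]; linarith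
    have q4 := pow_le_pow_left₀ (by positivity) q3 2
    rw [mul_pow, mul_pow, Real.sq_sqrt hm'] at q4
    linarith
  rw [← hh] at et
  have ht0 : 0 < t := by linarith [ht.1]
  have et' : μ * h^2 = π^2 + ((l:ℝ)^2 - 1/4) / t^2 * h^2 := by
    have : μ = π^2 / h^2 + ((l:ℝ)^2 - 1/4) / t^2 := by linarith
    rw [this]; field_simp
  have hl2 : (1:ℝ) ≤ (l:ℝ)^2 := one_le_pow₀ hlR
  have u1 : (l:ℝ)^2 - 1/4 ≤ ((l:ℝ)^2 - 1/4) / t^2 := by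
    rw [le_div_iff₀ (by positivity)]
    have : t^2 ≤ 1 := pow_le_one₀ ht0.le ht.2.le
    nlinarith
  have u2 : ((l:ℝ)^2 - 1/4) / t^2 ≤ (l:ℝ)^2 / a^2 := by
    have ha0 : 0 < a := by linarith
    have := ht.1.le
    gcongr
    linarith
  have v1 : (l * h)^2 ≤ 3 * π^2 + 4 * h^2 := by
    have := mul_le_mul_of_nonneg_right u1 (sq_nonneg h)
    nlinarith [sq_nonneg h]
  have v2 : 3 * π^2 * a^2 ≤ (l * h)^2 := by
    have ha0 : 0 < a := by linarith
    have w := mul_le_mul_of_nonneg_right u2 (sq_nonneg h)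
    have w2 : 3 * π^2 ≤ (l:ℝ)^2 / a^2 * h^2 := by linarith
    have w3 := mul_le_mul_of_nonneg_right w2 (sq_nonneg a)
    have w4 : (l:ℝ)^2 / a^2 * h^2 * a^2 = (l * h)^2 := by field_simp
    linarith
  exact final_arith l a h hlR hh hh0 hh1 v1 v2
end

section
/- There exist a constant C > 0 and an integer L such that the following holds for every integer l ≥ L: if a ∈ (1/2, 1) and μ > 0 are such that the Neumann problem ψ''(r) + ψ'(r)/r + μψ(r) = 0 on (a,1) with ψ'(a) = ψ'(1) = 0 has a nonconstant C² solution with exactly two zeros in (a,1), and the Dirichlet problem φ''(r) + φ'(r)/r − l²φ(r)/r² + μφ(r) = 0 on (a,1) with φ(a) = φ(1) = 0 has a C² solution which is positive on (a,1), then |a − (1 − √3·π/l + 3π²/(2l²))| ≤ C/l³. -/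
open Set Real

/-- Wronskian plus Rolle. -/
lemma wronskian_rolle {a b : ℝ} (hab : a < b) {p p1 q q1 P Q : ℝ → ℝ}
    (cp : ContinuousOn p (Icc a b)) (cp1 : ContinuousOn p1 (Icc a b))
    (cq : ContinuousOn q (Icc a b)) (cq1 : ContinuousOn q1 (Icc a b))
    (hp : ∀ r ∈ Ioo a b, HasDerivAt p (p1 r) r)
    (hp1 : ∀ r ∈ Ioo a b, HasDerivAt p1 (-(P r) * p r) r)
    (hq : ∀ r ∈ Ioo a b, HasDerivAt q (q1 r) r)
    (hq1 : ∀ r ∈ Ioo a b, HasDerivAt q1 (-(Q r) * q r) r)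
    (pa : p a = 0) (pb : p b = 0) (qa : q a = 0) (qb : q b = 0)
    (pne : ∀ r ∈ Ioo a b, p r ≠ 0) (qne : ∀ r ∈ Ioo a b, q r ≠ 0) :
    ∃ r ∈ Ioo a b, P r = Q r := by
  have hc : ContinuousOn (fun r => p1 r * q r - p r * q1 r) (Icc a b) :=
    (cp1.mul cq).sub (cp.mul cq1)
  obtain ⟨r, hr, h⟩ := exists_hasDerivAt_eq_zero (f := fun r => p1 r * q r - p r * q1 r)
    (f' := fun r => (-(P r) * p r * q r + p1 r * q1 r) - (p1 r * q1 r + p r * (-(Q r) * q r)))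
    hab hc (by simp [pa, pb, qa, qb])
    (fun r hr => ((hp1 r hr).mul (hq r hr)).sub ((hp r hr).mul (hq1 r hr)))
  refine ⟨r, hr, ?_⟩
  have h1 : (Q r - P r) * (p r * q r) = 0 := by linear_combination h
  rcases mul_eq_zero.1 h1 with h2 | h2
  · linarith
  · exact absurd h2 (mul_ne_zero (pne r hr) (qne r hr))

/-- Comparison with an explicit WKB-type function. -/
lemma wkb_compare {a b β : ℝ} (ha : 0 < a) (hab : a < b) (hβ0 : 0 ≤ β) (hβ : β * (b - a) < 2)
    {p p1 P : ℝ → ℝ}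
    (cp : ContinuousOn p (Icc a b)) (cp1 : ContinuousOn p1 (Icc a b))
    (hp : ∀ r ∈ Ioo a b, HasDerivAt p (p1 r) r)
    (hp1 : ∀ r ∈ Ioo a b, HasDerivAt p1 (-(p1 r / r) - P r * p r) r)
    (pa : p a = 0) (pb : p b = 0) (pne : ∀ r ∈ Ioo a b, p r ≠ 0) :
    ∃ r ∈ Ioo a b, P r + 1 / (4 * r ^ 2) =
      (π / (b - a)) ^ 2 * (1 + β * (r - (a + b) / 2)) ^ 2
        - 3 / 4 * β ^ 2 / (1 + β * (r - (a + b) / 2)) ^ 2 := by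
  set k : ℝ := π / (b - a) with hk
  have hba : 0 < b - a := by linarith
  have kpos : 0 < k := by positivity
  set h : ℝ → ℝ := fun r => 1 + β * (r - (a + b) / 2) with hh
  have hpos : ∀ r ∈ Icc a b, 0 < h r := by
    intro r hr
    simp only [hh]
    nlinarith [hr.1, hr.2, mul_nonneg hβ0 (sub_nonneg.2 hr.1)]
  set ρ : ℝ → ℝ := fun r => k * ((r - a) + β / 2 * ((r - a) * (r - b))) with hρ
  have dh : ∀ r, HasDerivAt h β r := by
    intro r
    have := (((hasDerivAt_id r).sub_const ((a + b) / 2)).const_mul β).const_add 1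
    simpa [hh] using this
  have dρ : ∀ r, HasDerivAt ρ (k * h r) r := by
    intro r
    have h1 := (hasDerivAt_id r).sub_const a
    have h2 := (hasDerivAt_id r).sub_const b
    have := (h1.add ((h1.mul h2).const_mul (β / 2))).const_mul k
    refine this.congr_deriv ?_
    simp only [hh, id]; ring
  have ρa : ρ a = 0 := by simp [hρ]
  have ρb : ρ b = π := by simp only [hρ, hk]; field_simp; ring
  have ρmono : StrictMonoOn ρ (Icc a b) := by
    apply strictMonoOn_of_deriv_pos (convex_Icc a b)
    · exact fun r _ => (dρ r).continuousAt.continuousWithinAt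
    · intro r hr
      rw [interior_Icc] at hr
      rw [(dρ r).deriv]
      exact mul_pos kpos (hpos r ⟨hr.1.le, hr.2.le⟩)
  have ch : Continuous h := continuous_iff_continuousAt.2 fun r => (dh r).continuousAt
  have cρ : Continuous ρ := continuous_iff_continuousAt.2 fun r => (dρ r).continuousAt
  have csh : ContinuousOn (fun r => √(h r)) (Icc a b) := by fun_prop
  have csr : ContinuousOn (fun r : ℝ => √r) (Icc a b) := by fun_prop
  have shne : ∀ r ∈ Icc a b, √(h r) ≠ 0 := fun r hr => (sqrt_pos.2 (hpos r hr)).ne'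
  have srne : ∀ r ∈ Icc a b, √r ≠ 0 := fun r hr => (sqrt_pos.2 (ha.trans_le hr.1)).ne'
  have dsh : ∀ r ∈ Icc a b, HasDerivAt (fun r => √(h r)) (β / (2 * √(h r))) r := fun r hr =>
    (dh r).sqrt (hpos r hr).ne'
  have dsr : ∀ r ∈ Icc a b, HasDerivAt (fun r : ℝ => √r) (1 / (2 * √r)) r := fun r hr =>
    (hasDerivAt_id r).sqrt (ha.trans_le hr.1).ne'
  apply wronskian_rolle (p := fun r => √r * p r)
    (p1 := fun r => p r / (2 * √r) + √r * p1 r)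
    (q := fun r => sin (ρ r) / √(h r))
    (q1 := fun r => k * √(h r) * cos (ρ r) - β / 2 * sin (ρ r) / (√(h r)) ^ 3) hab
  · exact csr.mul cp
  · exact (cp.div (csr.const_mul 2) (fun r hr => mul_ne_zero two_ne_zero (srne r hr))).add
      (csr.mul cp1)
  · exact (by fun_prop : ContinuousOn (fun r => sin (ρ r)) (Icc a b)).div csh shne
  · refine ((csh.const_mul k).mul (by fun_prop)).sub
      ((by fun_prop : ContinuousOn (fun r => β / 2 * sin (ρ r)) (Icc a b)).div (csh.pow 3)
        (fun r hr => pow_ne_zero 3 (shne r hr)))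
  · intro r hr
    have hr' := Ioo_subset_Icc_self hr
    refine ((dsr r hr').mul (hp r hr)).congr_deriv ?_
    have := srne r hr'
    field_simp
  · intro r hr
    have hr' := Ioo_subset_Icc_self hr
    have s0 := srne r hr'
    have hr0 : r ≠ 0 := (ha.trans_le hr'.1).ne'
    refine (((hp r hr).div ((dsr r hr').const_mul 2) (mul_ne_zero two_ne_zero s0)).add
      ((dsr r hr').mul (hp1 r hr))).congr_deriv ?_
    have e : r = √r ^ 2 := (sq_sqrt (ha.trans_le hr'.1).le).symm
    generalize p r = y at *
    generalize p1 r = y1 at *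
    generalize P r = PP at *
    generalize √r = s at *
    subst e
    field_simp
    ring
  · intro r hr
    have hr' := Ioo_subset_Icc_self hr
    have s0 := shne r hr'
    have e : h r = √(h r) ^ 2 := (sq_sqrt (hpos r hr').le).symm
    refine (((dρ r).sin).div (dsh r hr') s0).congr_deriv ?_
    generalize √(h r) = s at *
    rw [e]
    field_simp
  · intro r hr
    have hr' := Ioo_subset_Icc_self hr
    have s0 := shne r hr'
    have e : h r = √(h r) ^ 2 := (sq_sqrt (hpos r hr').le).symm
    refine ((((dsh r hr').const_mul k).mul (dρ r).cos).sub
      (((dρ r).sin.const_mul (β / 2)).div ((dsh r hr').pow 3)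
        (pow_ne_zero 3 s0))).congr_deriv ?_
    have e2 : 1 + β * (r - (a + b) / 2) = h r := rfl
    rw [e2]
    simp only [Pi.pow_apply]
    generalize √(h r) = s at *
    rw [e]
    field_simp
    push_cast
    ring
  · simp [pa]
  · simp [pb]
  · simp [ρa]
  · simp [ρb]
  · intro r hr
    exact mul_ne_zero (srne r (Ioo_subset_Icc_self hr)) (pne r hr)
  · intro r hr
    have hr' := Ioo_subset_Icc_self hr
    have h1 : ρ a < ρ r := ρmono ⟨le_rfl, hab.le⟩ hr' hr.1
    have h2 : ρ r < ρ b := ρmono hr' ⟨hab.le, le_rfl⟩ hr.2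
    rw [ρa] at h1
    rw [ρb] at h2
    exact div_ne_zero (sin_pos_of_pos_of_lt_pi h1 h2).ne' (shne r hr')

/-- Neumann: two-sided bound. -/
lemma neumann_bound_s8 {a μ : ℝ} (ha : a ∈ Ioo (1/2 : ℝ) 1) (hμ : 0 < μ) (hN : NeumannMu02 a μ) :
    4 * (π / (1 - a)) ^ 2 ≤ μ ∧ μ ≤ 4 * (π / (1 - a)) ^ 2 + 3 := by
  obtain ⟨ψ, hC, hode, hda, hd1, -, hcard⟩ := hN
  obtain ⟨ha1, ha2⟩ := ha
  have hU : UniqueDiffOn ℝ (Icc a 1) := uniqueDiffOn_Icc ha2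
  set χ := derivWithin ψ (Icc a 1) with hχ
  have hC1 : ContDiffOn ℝ 1 χ (Icc a 1) := hC.derivWithin hU (by norm_num)
  set χ1 := derivWithin χ (Icc a 1) with hχ1
  have cχ : ContinuousOn χ (Icc a 1) := hC1.continuousOn
  have cχ1 : ContinuousOn χ1 (Icc a 1) := hC1.continuousOn_derivWithin hU le_rfl
  have nb : ∀ r ∈ Ioo a 1, Icc a 1 ∈ nhds r := fun r hr => Icc_mem_nhds hr.1 hr.2
  have dψ : ∀ r ∈ Ioo a 1, HasDerivAt ψ (χ r) r := fun r hr =>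
    ((hC.differentiableOn (by norm_num)) r (Ioo_subset_Icc_self hr)).hasDerivWithinAt.hasDerivAt
      (nb r hr)
  have dχ : ∀ r ∈ Ioo a 1, HasDerivAt χ (χ1 r) r := fun r hr =>
    ((hC1.differentiableOn (by norm_num)) r (Ioo_subset_Icc_self hr)).hasDerivWithinAt.hasDerivAt
      (nb r hr)
  have e1 : ∀ r ∈ Ioo a 1, χ1 r = -(χ r / r) - μ * ψ r := by
    intro r hr
    have h1 : deriv ψ =ᶠ[nhds r] χ := by
      filter_upwards [Ioo_mem_nhds hr.1 hr.2] with x hx using (dψ x hx).deriv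
    have h2 := hode r hr
    rw [h1.deriv_eq, (dχ r hr).deriv, (dψ r hr).deriv] at h2
    linarith
  have dχ1 : ∀ r ∈ Ioo a 1, HasDerivAt χ1 (-(χ1 r / r) - (μ - 1 / r ^ 2) * χ r) r := by
    intro r hr
    have hr0 : r ≠ 0 := by have := hr.1; intro h; linarith
    have h1 : χ1 =ᶠ[nhds r] fun r => -(χ r / r) - μ * ψ r := by
      filter_upwards [Ioo_mem_nhds hr.1 hr.2] with x hx using e1 x hx
    refine HasDerivAt.congr_of_eventuallyEq ?_ h1
    refine ((((dχ r hr).div (hasDerivAt_id r) hr0).neg).sub ((dψ r hr).const_mul μ)).congr_deriv ?_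
    simp only [id]
    field_simp
    ring
  -- between zeros of χ there is a zero of ψ
  have key : ∀ x ∈ Icc a 1, ∀ y ∈ Icc a 1, x < y → χ x = 0 → χ y = 0 →
      ∃ r ∈ Ioo x y, ψ r = 0 := by
    intro x hx y hy hxy h0 h1
    have sub : ∀ r ∈ Ioo x y, r ∈ Ioo a 1 := fun r hr =>
      ⟨hx.1.trans_lt hr.1, hr.2.trans_le hy.2⟩
    obtain ⟨r, hr, h⟩ := exists_hasDerivAt_eq_zero (f := fun r => r * χ r)
      (f' := fun r => 1 * χ r + r * χ1 r) hxy
      (continuousOn_id.mul (cχ.mono (Icc_subset_Icc hx.1 hy.2))) (by simp [h0, h1])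
      (fun r hr => (hasDerivAt_id r).mul (dχ r (sub r hr)))
    refine ⟨r, hr, ?_⟩
    have hr0 : r ≠ 0 := by have := (sub r hr).1; intro h; linarith
    rw [e1 r (sub r hr)] at h
    have : r * μ * ψ r = 0 := by
      field_simp at h
      linarith
    exact (mul_eq_zero.1 this).resolve_left (mul_ne_zero hr0 hμ.ne')
  have three : ∀ x y, a < x → x < y → y < 1 → χ x = 0 → χ y = 0 → False := by
    intro x y h1 h2 h3 hx hy
    obtain ⟨r1, hr1, z1⟩ := key a ⟨le_rfl, ha2.le⟩ x ⟨h1.le, by linarith⟩ h1 hda hx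
    obtain ⟨r2, hr2, z2⟩ := key x ⟨h1.le, by linarith⟩ y ⟨by linarith, h3.le⟩ h2 hx hy
    obtain ⟨r3, hr3, z3⟩ := key y ⟨by linarith, h3.le⟩ 1 ⟨ha2.le, le_rfl⟩ h3 hy hd1
    obtain ⟨u, v, -, huv⟩ := Set.encard_eq_two.1 hcard
    have m1 : r1 ∈ ({u, v} : Set ℝ) := huv ▸ ⟨⟨hr1.1, by linarith [hr1.2]⟩, z1⟩
    have m2 : r2 ∈ ({u, v} : Set ℝ) := huv ▸ ⟨⟨by linarith [hr2.1], by linarith [hr2.2]⟩, z2⟩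
    have m3 : r3 ∈ ({u, v} : Set ℝ) := huv ▸ ⟨⟨by linarith [hr3.1], hr3.2⟩, z3⟩
    have l1 := hr1.2.trans hr2.1
    have l2 := hr2.2.trans hr3.1
    simp only [mem_insert_iff, mem_singleton_iff] at m1 m2 m3
    rcases m1 with m1 | m1 <;> rcases m2 with m2 | m2 <;> rcases m3 with m3 | m3 <;> linarith
  obtain ⟨z, hz, hz0⟩ : ∃ z ∈ Ioo a 1, χ z = 0 := by
    obtain ⟨u, v, hne, huv⟩ := Set.encard_eq_two.1 hcard
    have hu : u ∈ {r ∈ Ioo a 1 | ψ r = 0} := huv ▸ (by simp)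
    have hv : v ∈ {r ∈ Ioo a 1 | ψ r = 0} := huv ▸ (by simp)
    have main : ∀ u v, u ∈ {r ∈ Ioo a 1 | ψ r = 0} → v ∈ {r ∈ Ioo a 1 | ψ r = 0} → u < v →
        ∃ z ∈ Ioo a 1, χ z = 0 := by
      intro u v hu hv huv
      obtain ⟨r, hr, h⟩ := exists_hasDerivAt_eq_zero (f := ψ) (f' := χ) huv
        (hC.continuousOn.mono (Icc_subset_Icc hu.1.1.le hv.1.2.le)) (hu.2.trans hv.2.symm)
        (fun r hr => dψ r ⟨hu.1.1.trans hr.1, hr.2.trans hv.1.2⟩)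
      exact ⟨r, ⟨hu.1.1.trans hr.1, hr.2.trans hv.1.2⟩, h⟩
    rcases lt_or_gt_of_ne hne with h | h
    · exact main u v hu hv h
    · exact main v u hv hu h
  obtain ⟨hz1, hz2⟩ := hz
  have ne1 : ∀ r ∈ Ioo a z, χ r ≠ 0 := fun r hr h => three r z hr.1 hr.2 hz2 h hz0
  have ne2 : ∀ r ∈ Ioo z 1, χ r ≠ 0 := fun r hr h => three z r hz1 hr.1 hr.2 hz0 h
  have i1 : Icc a z ⊆ Icc a 1 := Icc_subset_Icc le_rfl hz2.le
  have i2 : Icc z 1 ⊆ Icc a 1 := Icc_subset_Icc hz1.le le_rfl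
  have j1 : Ioo a z ⊆ Ioo a 1 := Ioo_subset_Ioo le_rfl hz2.le
  have j2 : Ioo z 1 ⊆ Ioo a 1 := Ioo_subset_Ioo hz1.le le_rfl
  obtain ⟨r, hr, h1⟩ := wkb_compare (β := 0) (P := fun r => μ - 1 / r ^ 2) (by linarith : 0 < a) hz1
    le_rfl (by simp) (cχ.mono i1)
    (cχ1.mono i1) (fun r hr => dχ r (j1 hr)) (fun r hr => dχ1 r (j1 hr)) hda hz0 ne1
  obtain ⟨s, hs, h2⟩ := wkb_compare (β := 0) (P := fun r => μ - 1 / r ^ 2) (by linarith : 0 < z) hz2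
    le_rfl (by simp) (cχ.mono i2)
    (cχ1.mono i2) (fun r hr => dχ r (j2 hr)) (fun r hr => dχ1 r (j2 hr)) hz0 hd1 ne2
  have bd : ∀ r ∈ Ioo a 1, ∀ X : ℝ, μ - 1 / r ^ 2 + 1 / (4 * r ^ 2) = X → X ≤ μ ∧ μ ≤ X + 3 := by
    intro r hr X h
    have hr0 : 1/2 < r := ha1.trans hr.1
    have e : 1 / r ^ 2 - 1 / (4 * r ^ 2) = 3 / 4 * (1 / r ^ 2) := by field_simp; norm_num
    have h4 : 0 ≤ 1 / r ^ 2 := by positivity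
    have h5 : 1 / r ^ 2 ≤ 4 := by
      rw [div_le_iff₀ (by positivity)]; nlinarith
    constructor <;> linarith
  have b1 := bd r (j1 hr) _ h1
  have b2 := bd s (j2 hs) _ h2
  simp only [zero_mul, add_zero, one_pow, mul_one, div_one, ne_eq, OfNat.ofNat_ne_zero,
    not_false_eq_true, zero_pow, mul_zero, sub_zero] at b1 b2
  have d1 : 0 < z - a := by linarith
  have d2 : 0 < 1 - z := by linarith
  have d3 : 0 < 1 - a := by linarith
  have e4 : 4 * (π / (1 - a)) ^ 2 = (π / ((1 - a) / 2)) ^ 2 := by field_simp; norm_num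
  rw [e4]
  have mono : ∀ x y : ℝ, 0 < x → x ≤ y → (π / y) ^ 2 ≤ (π / x) ^ 2 := by
    intro x y hx hxy
    have := pi_pos
    have : 0 < y := by linarith
    gcongr
  rcases le_total (z - a) (1 - z) with hle | hle
  · have m1 := mono (z - a) ((1 - a) / 2) d1 (by linarith)
    have m2 := mono ((1 - a) / 2) (1 - z) (by linarith) (by linarith)
    constructor <;> linarith
  · have m1 := mono (1 - z) ((1 - a) / 2) d2 (by linarith)
    have m2 := mono ((1 - a) / 2) (z - a) (by linarith) (by linarith)
    constructor <;> linarith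

/-- Dirichlet: comparison identity. -/
lemma dirichlet_compare {a μ β : ℝ} {l : ℕ} (ha : a ∈ Ioo (1/2 : ℝ) 1)
    (hD : DirichletLam0 a μ l) (hβ0 : 0 ≤ β) (hβ : β * (1 - a) < 2) :
    ∃ r ∈ Ioo a 1, μ - (l:ℝ) ^ 2 / r ^ 2 + 1 / (4 * r ^ 2) =
      (π / (1 - a)) ^ 2 * (1 + β * (r - (a + 1) / 2)) ^ 2
        - 3 / 4 * β ^ 2 / (1 + β * (r - (a + 1) / 2)) ^ 2 := by
  obtain ⟨φ, hC, hode, h0, h1, hpos⟩ := hD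
  obtain ⟨ha1, ha2⟩ := ha
  have hU : UniqueDiffOn ℝ (Icc a 1) := uniqueDiffOn_Icc ha2
  set χ := derivWithin φ (Icc a 1) with hχ
  have hC1 : ContDiffOn ℝ 1 χ (Icc a 1) := hC.derivWithin hU (by norm_num)
  have nb : ∀ r ∈ Ioo a 1, Icc a 1 ∈ nhds r := fun r hr => Icc_mem_nhds hr.1 hr.2
  have dφ : ∀ r ∈ Ioo a 1, HasDerivAt φ (χ r) r := fun r hr =>
    ((hC.differentiableOn (by norm_num)) r (Ioo_subset_Icc_self hr)).hasDerivWithinAt.hasDerivAt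
      (nb r hr)
  have dχ : ∀ r ∈ Ioo a 1, HasDerivAt χ (derivWithin χ (Icc a 1) r) r := fun r hr =>
    ((hC1.differentiableOn (by norm_num)) r (Ioo_subset_Icc_self hr)).hasDerivWithinAt.hasDerivAt
      (nb r hr)
  refine wkb_compare (P := fun r => μ - (l:ℝ) ^ 2 / r ^ 2) (by linarith) ha2 hβ0 hβ hC.continuousOn
    hC1.continuousOn dφ ?_ h0 h1 (fun r hr => (hpos r hr).ne')
  intro r hr
  refine (dχ r hr).congr_deriv ?_
  have e1 : deriv φ =ᶠ[nhds r] χ := by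
    filter_upwards [Ioo_mem_nhds hr.1 hr.2] with x hx using (dφ x hx).deriv
  have h2 := hode r hr
  rw [e1.deriv_eq, (dχ r hr).deriv, (dφ r hr).deriv] at h2
  linear_combination h2

/-- Elementary final step. -/
lemma final_algebra {N s c : ℝ} (hN : 1 ≤ N) (hs : 0 ≤ s) (hs7 : s ≤ 7) (hc : 1 ≤ c)
    (h : |c ^ 2 - s ^ 2 * (1 + s / N)| ≤ 29400 / N ^ 2) :
    |c - s - c ^ 2 / (2 * N)| ≤ 45000 / N ^ 2 := by
  have hN0 : 0 < N := by linarith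
  obtain ⟨t, ht⟩ : ∃ t, t = 1 / N := ⟨_, rfl⟩
  have ht0 : 0 < t := by rw [ht]; positivity
  have ht1 : t ≤ 1 := by rw [ht, div_le_one hN0]; exact hN
  have e1 : s / N = s * t := by rw [ht]; ring
  have e2 : (29400 : ℝ) / N ^ 2 = 29400 * t ^ 2 := by rw [ht]; ring
  have e3 : (45000 : ℝ) / N ^ 2 = 45000 * t ^ 2 := by rw [ht]; ring
  have e4 : c ^ 2 / (2 * N) = c ^ 2 * t / 2 := by rw [ht]; field_simp
  rw [e1, e2] at h
  rw [e3, e4]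
  obtain ⟨h1, h2⟩ := abs_le.1 h
  have s3 : s ^ 3 ≤ 343 := by
    calc s ^ 3 ≤ 7 ^ 3 := by gcongr
      _ = 343 := by norm_num
  have s4 : s ^ 4 ≤ 2401 := by
    calc s ^ 4 ≤ 7 ^ 4 := by gcongr
      _ = 2401 := by norm_num
  have s30 : 0 ≤ s ^ 3 := by positivity
  have s40 : 0 ≤ s ^ 4 := by positivity
  have t2 : 0 < t ^ 2 := by positivity
  have tt : t ^ 2 ≤ t := by nlinarith
  have A : |(c - (s + s ^ 2 * t / 2)) * (c + (s + s ^ 2 * t / 2))| ≤ 30001 * t ^ 2 := by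
    have e : (c - (s + s ^ 2 * t / 2)) * (c + (s + s ^ 2 * t / 2)) =
        (c ^ 2 - s ^ 2 * (1 + s * t)) - s ^ 4 * t ^ 2 / 4 := by ring
    rw [e, abs_le]
    have := mul_le_mul_of_nonneg_right s4 t2.le
    have := mul_nonneg s40 t2.le
    constructor <;> linarith
  have B : |c - (s + s ^ 2 * t / 2)| ≤ 30001 * t ^ 2 := by
    rw [abs_mul] at A
    have h0 : 0 ≤ s ^ 2 * t := by positivity
    have h3 : 1 ≤ |c + (s + s ^ 2 * t / 2)| := by
      rw [abs_of_nonneg (by linarith)]; linarith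
    exact (le_mul_of_one_le_right (abs_nonneg _) h3).trans A
  have D : |s ^ 2 - c ^ 2| ≤ 29743 * t := by
    have := mul_le_mul_of_nonneg_right s3 ht0.le
    have := mul_nonneg s30 ht0.le
    have e : s ^ 2 * (1 + s * t) = s ^ 2 + s ^ 3 * t := by ring
    rw [e] at h1 h2
    rw [abs_le]
    constructor <;> linarith
  obtain ⟨b1, b2⟩ := abs_le.1 B
  obtain ⟨d1, d2⟩ := abs_le.1 D
  have f1 := mul_le_mul_of_nonneg_right d1 ht0.le
  have f2 := mul_le_mul_of_nonneg_right d2 ht0.le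
  rw [abs_le]
  constructor <;> nlinarith

set_option maxHeartbeats 1000000 in
/-- Main estimate. -/
lemma main_estimate {a μ : ℝ} {l : ℕ} (hl : 28 ≤ l) (ha : a ∈ Ioo (1/2 : ℝ) 1) (hμ : 0 < μ)
    (hN : NeumannMu02 a μ) (hD : DirichletLam0 a μ l) :
    (l:ℝ) * (1 - a) ≤ 7 ∧
      |3 * (π / (1 - a)) ^ 2 - (l:ℝ) ^ 2 * (1 + (1 - a))| ≤ 600 := by
  obtain ⟨n1, n2⟩ := neumann_bound_s8 ha hμ hN
  have hNl : (28:ℝ) ≤ l := by exact_mod_cast hl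
  obtain ⟨r, hr, h1⟩ := dirichlet_compare (β := 0) ha hD le_rfl (by simp)
  have cmp := fun β => dirichlet_compare (β := β) ha hD
  obtain ⟨ha1, ha2⟩ := ha
  obtain ⟨D, hDe⟩ : ∃ D, D = 1 - a := ⟨_, rfl⟩
  simp only [← hDe] at n1 n2 h1 cmp ⊢
  have D0 : 0 < D := by linarith
  have D1 : D < 1 / 2 := by linarith
  obtain ⟨k, hk⟩ : ∃ k, k = π / D := ⟨_, rfl⟩
  have kD : k * D = π := by rw [hk]; field_simp
  simp only [← hk] at n1 n2 h1 cmp ⊢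
  have pi3 := pi_gt_three
  have pi4 := pi_lt_d2
  have k0 : 0 < k := by rw [hk]; positivity
  have k6 : 6 ≤ k := by nlinarith
  have k36 : 36 ≤ k ^ 2 := by nlinarith
  generalize (l:ℝ) = N at *
  have hr0 : 0 < r := by linarith [hr.1]
  have hr1 : r < 1 := hr.2
  simp only [zero_mul, add_zero, one_pow, mul_one, div_one, ne_eq, OfNat.ofNat_ne_zero,
    not_false_eq_true, zero_pow, mul_zero, sub_zero] at h1
  have hNk : N ^ 2 ≤ 4 * k ^ 2 := by
    have e : N ^ 2 / r ^ 2 - 1 / (4 * r ^ 2) = (N ^ 2 - 1 / 4) / r ^ 2 := by field_simp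
    have h3 : N ^ 2 - 1 / 4 ≤ (N ^ 2 - 1 / 4) / r ^ 2 := by
      rw [le_div_iff₀ (by positivity)]
      have : r ^ 2 ≤ 1 := by nlinarith
      have : 0 ≤ N ^ 2 - 1 / 4 := by nlinarith
      nlinarith
    linarith
  have hND2 : N ^ 2 * D ^ 2 ≤ 40 := by
    have h3 : N ^ 2 * D ^ 2 ≤ 4 * k ^ 2 * D ^ 2 := by gcongr
    have h4 : 4 * k ^ 2 * D ^ 2 = 4 * π ^ 2 := by rw [← kD]; ring
    nlinarith
  have hND : N * D ≤ 7 := by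
    by_contra hcon
    push Not at hcon
    nlinarith
  refine ⟨hND, ?_⟩
  have D4 : D ≤ 1 / 4 := by nlinarith
  obtain ⟨β, hβ⟩ : ∃ β, β = N ^ 2 / k ^ 2 := ⟨_, rfl⟩
  have hβk : k ^ 2 * β = N ^ 2 := by rw [hβ]; field_simp
  have β0 : 0 ≤ β := by rw [hβ]; positivity
  have β4 : β ≤ 4 := by rw [hβ, div_le_iff₀ (by positivity)]; exact hNk
  clear h1 hr hr0 hr1 r
  obtain ⟨r, hr, h1⟩ := cmp β β0 (by nlinarith)
  have hr0 : 1 / 2 < r := by linarith [hr.1]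
  have hr1 : r < 1 := hr.2
  obtain ⟨x, hx⟩ : ∃ x, x = r - (a + 1) / 2 := ⟨_, rfl⟩
  obtain ⟨y, hy⟩ : ∃ y, y = 1 - r := ⟨_, rfl⟩
  have hxy : x + y = D / 2 := by linarith
  have y0 : 0 < y := by linarith
  have yD : y < D := by linarith [hr.1]
  rw [← hx] at h1
  have x2 : x ^ 2 ≤ D ^ 2 / 4 := by
    have hy2 : y = D / 2 - x := by linarith
    rw [hy2] at y0 yD
    have h3 : 0 < D / 2 + x := by linarith
    linarith [mul_pos y0 h3]
  have hh : 1 / 2 ≤ 1 + β * x := by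
    have h3 : 0 ≤ x + D / 2 := by linarith
    have h4 := mul_nonneg β0 h3
    have h5 := mul_le_mul β4 D4 D0.le (by norm_num)
    linarith
  have E1 : 0 ≤ N ^ 2 * x ^ 2 * β ∧ N ^ 2 * x ^ 2 * β ≤ 40 := by
    refine ⟨by positivity, ?_⟩
    have : N ^ 2 * x ^ 2 ≤ 10 := by
      have h3 := mul_le_mul_of_nonneg_left x2 (sq_nonneg N)
      linarith
    have := mul_le_mul this β4 β0 (by norm_num)
    linarith
  have E3 : 0 ≤ 1 / (4 * r ^ 2) ∧ 1 / (4 * r ^ 2) ≤ 1 := by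
    refine ⟨by positivity, ?_⟩
    rw [div_le_one (by positivity)]
    nlinarith only [hr0]
  have E4 : 0 ≤ 3 / 4 * β ^ 2 / (1 + β * x) ^ 2 ∧ 3 / 4 * β ^ 2 / (1 + β * x) ^ 2 ≤ 48 := by
    refine ⟨by positivity, ?_⟩
    rw [div_le_iff₀ (by positivity)]
    have h3 : β ^ 2 ≤ 16 := by nlinarith only [β0, β4]
    have h4 : 1 / 4 ≤ (1 + β * x) ^ 2 := by nlinarith only [hh]
    linarith
  have E2 : 0 ≤ N ^ 2 / r ^ 2 - N ^ 2 * (1 + 2 * y) ∧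
      N ^ 2 / r ^ 2 - N ^ 2 * (1 + 2 * y) ≤ 480 := by
    have e : N ^ 2 / r ^ 2 - N ^ 2 * (1 + 2 * y) = N ^ 2 * y ^ 2 * (1 + 2 * r) / r ^ 2 := by
      rw [hy]; field_simp; ring
    rw [e]
    refine ⟨by positivity, ?_⟩
    rw [div_le_iff₀ (by positivity)]
    have h3 : N ^ 2 * y ^ 2 ≤ 40 := le_trans (by gcongr) hND2
    have h4 : N ^ 2 * y ^ 2 * (1 + 2 * r) ≤ 40 * 3 := by
      gcongr
      linarith
    nlinarith only [hr0, h4]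
  have e : k ^ 2 * (1 + β * x) ^ 2 = k ^ 2 + 2 * (k ^ 2 * β) * x + (k ^ 2 * β) * x ^ 2 * β := by
    ring
  rw [e, hβk] at h1
  have e5 : N ^ 2 * D = N ^ 2 * (2 * (x + y)) := by rw [hxy]; ring
  rw [abs_le]
  constructor <;> linarith [E1.1, E1.2, E2.1, E2.2, E3.1, E3.2, E4.1, E4.2]

/-- Second-order asymptotics of the crossing points:
`a_l = 1 − √3·π/l + 3π²/(2l²) + O(l⁻³)`. -/
theorem crossing_point_second_order_asymptotics :
    ∃ C > (0:ℝ), ∃ L : ℕ, ∀ l : ℕ, L ≤ l →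
      ∀ a ∈ Set.Ioo (1/2 : ℝ) 1, ∀ μ > (0:ℝ),
        NeumannMu02 a μ → DirichletLam0 a μ l →
        |a - (1 - Real.sqrt 3 * π / l + 3 * π^2 / (2 * (l:ℝ)^2))| ≤ C / (l:ℝ)^3 := by
  refine ⟨45000, by norm_num, 28, ?_⟩
  intro l hl a ha μ hμ hN hD
  obtain ⟨h7, h600⟩ := main_estimate hl ha hμ hN hD
  have hNl : (28:ℝ) ≤ l := by exact_mod_cast hl
  obtain ⟨ha1, ha2⟩ := ha
  generalize (l:ℝ) = N at *
  have D0 : 0 < 1 - a := by linarith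
  have N0 : 0 < N := by linarith
  have pi3 := pi_gt_three
  have s3 : 1 ≤ √3 := by rw [Real.one_le_sqrt]; norm_num
  have s3sq : √3 ^ 2 = 3 := Real.sq_sqrt (by norm_num)
  have key : |(√3 * π) ^ 2 - (N * (1 - a)) ^ 2 * (1 + N * (1 - a) / N)| ≤ 29400 / N ^ 2 := by
    have e : (√3 * π) ^ 2 - (N * (1 - a)) ^ 2 * (1 + N * (1 - a) / N) =
        (3 * (π / (1 - a)) ^ 2 - N ^ 2 * (1 + (1 - a))) * (1 - a) ^ 2 := by
      rw [mul_pow, s3sq]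
      field_simp
    rw [e, abs_mul, abs_of_nonneg (sq_nonneg (1 - a)), le_div_iff₀ (by positivity)]
    have h49 : (N * (1 - a)) ^ 2 ≤ 49 := by
      have : 0 ≤ N * (1 - a) := by positivity
      nlinarith
    calc _ = |3 * (π / (1 - a)) ^ 2 - N ^ 2 * (1 + (1 - a))| * (N * (1 - a)) ^ 2 := by ring
      _ ≤ 600 * 49 := by gcongr
      _ = 29400 := by norm_num
  have fin := final_algebra (by linarith) (by positivity) h7 (by nlinarith) key
  have e : a - (1 - √3 * π / N + 3 * π ^ 2 / (2 * N ^ 2)) =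
      (√3 * π - N * (1 - a) - (√3 * π) ^ 2 / (2 * N)) / N := by
    rw [mul_pow, s3sq]
    field_simp
    ring
  rw [e, abs_div, abs_of_pos N0, div_le_iff₀ N0]
  refine fin.trans (le_of_eq ?_)
  field_simp
end
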